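/- arXiv:2007.11482 — 2 statements merged into one kernel-verified Lean document; each statement's English description precedes it below -/
import Mathlib

section
/- Sharp threshold for template matching: in the template matching model with σ² = L/(α log L), if α > 2 then the error probability of the MAP estimator satisfies p_e → 0 as L → ∞, while if α < 2 then p_e → 1 as L → ∞. -/
open MeasureTheory ProbabilityTheory Filter
open scoped ENNReal

namespace MRAformal

/-- Standard Gaussian measure `N(0, I_L)` on `ℝ^L`. -/
noncomputable def stdGaussian (L : ℕ) : Measure (Fin L → ℝ) :=
  Measure.pi fun _ => gaussianReal 0 1

/-- Uniform distribution on `{0, …, L-1}`. -/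
noncomputable def unifFin (L : ℕ) : Measure (Fin L) :=
  ((L : ℝ≥0∞))⁻¹ • Measure.count

/-- Probability space for the template matching model: the template `X`, the uniform
shift `ℓ`, and the Gaussian noise `Z`. -/
noncomputable def tmBase (L : ℕ) : Measure ((Fin L → ℝ) × Fin L × (Fin L → ℝ)) :=
  (stdGaussian L).prod ((unifFin L).prod (stdGaussian L))

/-- The observation `Y = R_ℓ X + σ Z`, i.e. `Y_j = X_{j+ℓ} + σ Z_j`. -/
def tmY (L : ℕ) (σ : ℝ) (ω : (Fin L → ℝ) × Fin L × (Fin L → ℝ)) : Fin L → ℝ :=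
  fun j => ω.1 (j + ω.2.1) + σ * ω.2.2 j

/-- The correlation `⟨x, R_{ℓ'}⁻¹ y⟩ = ∑_j x_j y_{j-ℓ'}`. -/
def corr {L : ℕ} (x y : Fin L → ℝ) (ℓ' : Fin L) : ℝ :=
  ∑ j, x j * y (j - ℓ')

/-- Noise level such that `σ²(α) = L / (α log L)`. -/
noncomputable def sigmaAlpha (L : ℕ) (α : ℝ) : ℝ :=
  Real.sqrt ((L : ℝ) / (α * Real.log L))

/-!
Given the template `x`, the observation `σ⁻¹ Y` is a standard Gaussian vector shifted by one of the
`L` codewords `u_l = σ⁻¹ R_l x`, and for a typical `x` these have squared length close to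
`σ⁻² L = α log L` and are nearly orthogonal.

* If `α > 2`, the plain union bound over the competitors loses a factor two in the exponent, because
  the competitors share the fluctuation of the noise along the true codeword. Once that fluctuation
  is known to be small, a wrong codeword beats the true one with probability about `L ^ (-α / 2)`,
  and the union bound over the `L` competitors is sharp.
* If `α < 2`, the law of the observation under any codeword has density at most about `L ^ (α / 2)`
  with respect to the standard Gaussian outside an event of small probability. As the decoding
  regions partition the space, their Gaussian measures sum to one, so the mean probability of
  correct decoding is at most about `L ^ (α / 2 - 1)`.

The autocorrelation `∑ i, x i * x (i + l)` of the template is not a sum of independent terms; a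
`3`-colouring of the indices in which `i` and `i + l` get different colours splits it into three
inner products of independent Gaussian vectors.
-/

/-- The standard Gaussian law on `ι → ℝ` for an arbitrary finite index type; `stdGaussian L` is
the case `ι = Fin L`. -/
noncomputable abbrev gaussianPi (ι : Type*) [Fintype ι] : Measure (ι → ℝ) :=
  Measure.pi fun _ => gaussianReal 0 1

section GaussianIntegrals

lemma gaussianPDFReal_mul_exp_mul_sq (w y : ℝ) :
    gaussianPDFReal 0 1 y * Real.exp (w * y ^ 2) =
      (√(2 * Real.pi))⁻¹ * Real.exp (-(1 / 2 - w) * y ^ 2) := by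
  simp only [gaussianPDFReal, NNReal.coe_one, mul_one, sub_zero]
  rw [mul_assoc, ← Real.exp_add]
  congr 2
  ring

lemma integrable_exp_mul_sq_gaussianReal {w : ℝ} (hw : w < 1 / 2) :
    Integrable (fun y => Real.exp (w * y ^ 2)) (gaussianReal 0 1) := by
  rw [gaussianReal_of_var_ne_zero _ one_ne_zero,
    integrable_withDensity_iff_integrable_smul' (measurable_gaussianPDF _ _)
      (ae_of_all _ fun _ => gaussianPDF_lt_top)]
  simp only [toReal_gaussianPDF, smul_eq_mul, gaussianPDFReal_mul_exp_mul_sq]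
  exact (integrable_exp_neg_mul_sq (sub_pos.2 hw)).const_mul _

lemma integral_exp_mul_sq_gaussianReal {w : ℝ} (hw : w < 1 / 2) :
    ∫ y, Real.exp (w * y ^ 2) ∂gaussianReal 0 1 = (√(1 - 2 * w))⁻¹ := by
  have hw' : 0 < 1 - 2 * w := by linarith
  simp only [integral_gaussianReal_eq_integral_smul one_ne_zero, smul_eq_mul,
    gaussianPDFReal_mul_exp_mul_sq, integral_const_mul, integral_gaussian]
  rw [← Real.sqrt_inv, ← Real.sqrt_inv, ← Real.sqrt_mul (by positivity)]
  congr 1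
  field_simp

variable {ι : Type*} [Fintype ι]

lemma integrable_exp_dotProduct_gaussianPi (c : ι → ℝ) :
    Integrable (fun z => Real.exp (c ⬝ᵥ z)) (gaussianPi ι) := by
  simp only [dotProduct, Real.exp_sum]
  exact Integrable.fintype_prod fun i => integrable_exp_mul_gaussianReal (c i)

lemma integral_exp_dotProduct_gaussianPi (c : ι → ℝ) :
    ∫ z, Real.exp (c ⬝ᵥ z) ∂gaussianPi ι = Real.exp (c ⬝ᵥ c / 2) := by
  simp only [dotProduct, Real.exp_sum, Finset.sum_div]
  rw [integral_fintype_prod_eq_prod (f := fun i y => Real.exp (c i * y))]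
  refine Finset.prod_congr rfl fun i _ => ?_
  simpa [mgf, sq] using congrFun (mgf_id_gaussianReal (μ := 0) (v := 1)) (c i)

lemma integrable_exp_mul_dotProduct_self_gaussianPi {w : ℝ} (hw : w < 1 / 2) :
    Integrable (fun x => Real.exp (w * (x ⬝ᵥ x))) (gaussianPi ι) := by
  simp only [dotProduct, Finset.mul_sum, Real.exp_sum, ← sq]
  exact Integrable.fintype_prod fun _ => integrable_exp_mul_sq_gaussianReal hw

lemma integral_exp_mul_dotProduct_self_gaussianPi {w : ℝ} (hw : w < 1 / 2) :
    ∫ x, Real.exp (w * (x ⬝ᵥ x)) ∂gaussianPi ι = (√(1 - 2 * w))⁻¹ ^ Fintype.card ι := by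
  simp only [dotProduct, Finset.mul_sum, Real.exp_sum, ← sq]
  rw [integral_fintype_prod_eq_pow (f := fun y => Real.exp (w * y ^ 2)),
    integral_exp_mul_sq_gaussianReal hw]

lemma inv_sqrt_one_sub_two_mul_le_exp {w : ℝ} (hw : |w| ≤ 1 / 4) :
    (√(1 - 2 * w))⁻¹ ≤ Real.exp (w + 4 * w ^ 2) := by
  have hw' : w ≤ 1 / 4 := (le_abs_self w).trans hw
  have hlog : -(2 * w + 2 * (2 * w) ^ 2) ≤ Real.log (1 - 2 * w) := by
    have habs : |2 * w| ≤ 1 / 2 := by rw [abs_mul, abs_two]; linarith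
    have htaylor := Real.abs_log_sub_add_sum_range_le (habs.trans_lt one_half_lt_one) 1
    have herr : |2 * w| ^ 2 / (1 - |2 * w|) ≤ 2 * (2 * w) ^ 2 := by
      rw [sq_abs, div_le_iff₀ (by linarith)]
      nlinarith [sq_nonneg (2 * w)]
    simp only [Finset.range_one, Finset.sum_singleton, zero_add, pow_one, Nat.cast_zero, div_one,
      one_add_one_eq_two] at htaylor
    linarith [(abs_le.1 htaylor).1]
  rw [inv_le_comm₀ (Real.sqrt_pos.2 (by linarith)) (Real.exp_pos _), ← Real.exp_neg,
    ← Real.exp_log (by linarith : 0 < 1 - 2 * w), ← Real.exp_half]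
  exact Real.exp_le_exp.2 (by linarith)

lemma integral_exp_mul_dotProduct_self_gaussianPi_le {w : ℝ} (hw : |w| ≤ 1 / 4) :
    ∫ x, Real.exp (w * (x ⬝ᵥ x)) ∂gaussianPi ι ≤
      Real.exp (Fintype.card ι * (w + 4 * w ^ 2)) := by
  rw [integral_exp_mul_dotProduct_self_gaussianPi (by linarith [le_abs_self w]), Real.exp_nat_mul]
  gcongr
  exact inv_sqrt_one_sub_two_mul_le_exp hw

end GaussianIntegrals

section CameronMartin

lemma gaussianReal_map_const_add_eq_withDensity (u : ℝ) :
    (gaussianReal 0 1).map (u + ·) =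
      (gaussianReal 0 1).withDensity fun y => ENNReal.ofReal (Real.exp (u * y - u * u / 2)) := by
  rw [gaussianReal_map_const_add, gaussianReal_of_var_ne_zero _ one_ne_zero,
    gaussianReal_of_var_ne_zero _ one_ne_zero,
    ← withDensity_mul _ (measurable_gaussianPDF _ _) (by fun_prop)]
  congr 1
  ext y
  simp only [gaussianPDF, gaussianPDFReal, Pi.mul_apply]
  rw [← ENNReal.ofReal_mul (by positivity), mul_assoc _ (Real.exp _), ← Real.exp_add]
  congr 3
  simp only [NNReal.coe_one]
  ring

lemma pi_withDensity {ι : Type*} [Fintype ι] {Ω : ι → Type*} [∀ i, MeasurableSpace (Ω i)]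
    (μ : ∀ i, Measure (Ω i)) [∀ i, IsProbabilityMeasure (μ i)] {f : ∀ i, Ω i → ℝ≥0∞}
    (hf : ∀ i, Measurable (f i)) [∀ i, SigmaFinite ((μ i).withDensity (f i))] :
    Measure.pi (fun i => (μ i).withDensity (f i)) =
      (Measure.pi μ).withDensity fun x => ∏ i, f i (x i) := by
  refine Measure.pi_eq fun s hs => ?_
  have hind (x : ∀ i, Ω i) : (Set.univ.pi s).indicator (fun x => ∏ i, f i (x i)) x =
      ∏ i, (s i).indicator (f i) (x i) := by
    classical
    simp [Set.indicator, Finset.prod_ite_zero]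
  have hmeas (i : ι) : Measurable ((s i).indicator (f i)) := (hf i).indicator (hs i)
  have hindep := (iIndepFun_pi (μ := μ) (X := fun _ y => y) fun _ => aemeasurable_id).comp _ hmeas
  rw [withDensity_apply _ (.univ_pi hs), ← lintegral_indicator (.univ_pi hs)]
  simp_rw [hind]
  refine (lintegral_prod_eq_prod_lintegral_of_indepFun Finset.univ _ hindep
    fun i => (hmeas i).comp (measurable_pi_apply i)).trans (Finset.prod_congr rfl fun i _ => ?_)
  rw [withDensity_apply _ (hs i), ← lintegral_indicator (hs i)]
  exact (measurePreserving_eval μ i).lintegral_comp (hmeas i)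

variable {ι : Type*} [Fintype ι]

lemma gaussianPi_map_const_add_eq_withDensity (u : ι → ℝ) :
    (gaussianPi ι).map (u + ·) =
      (gaussianPi ι).withDensity fun y => ENNReal.ofReal (Real.exp (u ⬝ᵥ y - u ⬝ᵥ u / 2)) := by
  have (i : ι) : IsProbabilityMeasure ((gaussianReal 0 1).map (u i + ·)) :=
    Measure.isProbabilityMeasure_map (by fun_prop)
  have hdens (i : ι) := gaussianReal_map_const_add_eq_withDensity (u i)
  have hfin (i : ι) : SigmaFinite ((gaussianReal 0 1).withDensity fun y =>
      ENNReal.ofReal (Real.exp (u i * y - u i * u i / 2))) := hdens i ▸ inferInstance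
  calc
    (gaussianPi ι).map (u + ·) = Measure.pi fun i => (gaussianReal 0 1).map (u i + ·) :=
      Measure.pi_map_pi fun i => (measurable_const_add (u i)).aemeasurable
    _ = _ := by
      simp_rw [hdens]
      rw [pi_withDensity _ fun i => by fun_prop]
      simp only [← ENNReal.ofReal_prod_of_nonneg (fun _ _ => (Real.exp_pos _).le), ← Real.exp_sum,
        Finset.sum_sub_distrib, dotProduct, Finset.sum_div]

end CameronMartin

section Tails

variable {ι : Type*} [Fintype ι]

lemma hasSubgaussianMGF_dotProduct_gaussianPi {c : ι → ℝ} {V : NNReal} (hV : c ⬝ᵥ c ≤ V) :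
    HasSubgaussianMGF (c ⬝ᵥ ·) V (gaussianPi ι) where
  integrable_exp_mul t := by
    simpa only [smul_dotProduct, smul_eq_mul] using integrable_exp_dotProduct_gaussianPi (t • c)
  mgf_le t := by
    have hmgf := integral_exp_dotProduct_gaussianPi (t • c)
    simp only [smul_dotProduct, dotProduct_smul, smul_eq_mul] at hmgf
    rw [mgf, hmgf, Real.exp_le_exp]
    nlinarith [mul_le_mul_of_nonneg_left hV (sq_nonneg t)]

lemma gaussianPi_real_le_dotProduct_le {c : ι → ℝ} {V t : ℝ} (hV : c ⬝ᵥ c ≤ V) (ht : 0 ≤ t) :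
    (gaussianPi ι).real {z | t ≤ c ⬝ᵥ z} ≤ Real.exp (-t ^ 2 / (2 * V)) := by
  lift V to NNReal using (Finset.sum_nonneg fun i _ => mul_self_nonneg (c i)).trans hV
  exact (hasSubgaussianMGF_dotProduct_gaussianPi hV).measure_ge_le ht

lemma gaussianPi_real_const_add_mem_le_of_dotProduct_le {u : ι → ℝ} {A : Set (ι → ℝ)} {r : ℝ}
    (hA : MeasurableSet A) (hr : ∀ y ∈ A, u ⬝ᵥ y ≤ r) :
    (gaussianPi ι).real {z | u + z ∈ A} ≤
      Real.exp (r - u ⬝ᵥ u / 2) * (gaussianPi ι).real A := by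
  have hle : gaussianPi ι {z | u + z ∈ A} ≤
      ENNReal.ofReal (Real.exp (r - u ⬝ᵥ u / 2)) * gaussianPi ι A :=
    calc
      gaussianPi ι {z | u + z ∈ A} = (gaussianPi ι).map (u + ·) A :=
        (Measure.map_apply (measurable_const_add u) hA).symm
      _ = ∫⁻ y in A, ENNReal.ofReal (Real.exp (u ⬝ᵥ y - u ⬝ᵥ u / 2)) ∂gaussianPi ι := by
        rw [gaussianPi_map_const_add_eq_withDensity, withDensity_apply _ hA]
      _ ≤ ∫⁻ _ in A, ENNReal.ofReal (Real.exp (r - u ⬝ᵥ u / 2)) ∂gaussianPi ι :=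
        setLIntegral_mono measurable_const fun y hy => by gcongr; exact hr y hy
      _ = _ := setLIntegral_const _ _
  simpa [Measure.real, ENNReal.toReal_ofReal (Real.exp_nonneg _)] using
    ENNReal.toReal_mono (by finiteness) hle

lemma gaussianPi_real_const_add_mem_le (u : ι → ℝ) {A : Set (ι → ℝ)} (hA : MeasurableSet A)
    (t : ℝ) :
    (gaussianPi ι).real {z | u + z ∈ A} ≤
      (gaussianPi ι).real {z | t ≤ u ⬝ᵥ z} +
        Real.exp (t + u ⬝ᵥ u / 2) * (gaussianPi ι).real A := by
  set B : Set (ι → ℝ) := A ∩ {y | u ⬝ᵥ y ≤ u ⬝ᵥ u + t}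
  have hB : MeasurableSet B :=
    hA.inter (measurableSet_le (by unfold dotProduct; fun_prop) measurable_const)
  have hsub : {z | u + z ∈ A} ⊆ {z | t ≤ u ⬝ᵥ z} ∪ {z | u + z ∈ B} := fun z hz =>
    (le_total t (u ⬝ᵥ z)).imp id fun h => ⟨hz, by simpa [dotProduct_add] using h⟩
  calc
    (gaussianPi ι).real {z | u + z ∈ A} ≤
        (gaussianPi ι).real {z | t ≤ u ⬝ᵥ z} + (gaussianPi ι).real {z | u + z ∈ B} :=
      (measureReal_mono hsub).trans (measureReal_union_le _ _)
    _ ≤ _ := by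
      gcongr
      refine (gaussianPi_real_const_add_mem_le_of_dotProduct_le hB fun y hy => hy.2).trans ?_
      gcongr
      · linarith
      · finiteness
      · exact Set.inter_subset_left

end Tails

section GaussianChannel

variable {ι κ : Type*} [Fintype ι] [Fintype κ] {u : κ → ι → ℝ} {V : ℝ}

-- Another codeword can catch up with `u k` only if `⟨u k, z⟩ ≤ -p` or `q ≤ ⟨u l, z⟩` for some `l`.
lemma gaussianPi_real_exists_dotProduct_add_le_le {p q : ℝ} {k : κ} (hV : ∀ l, u l ⬝ᵥ u l ≤ V)
    (hp : 0 ≤ p) (hq : 0 ≤ q) (hgap : ∀ l ≠ k, u l ⬝ᵥ u k + (p + q) ≤ u k ⬝ᵥ u k) :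
    (gaussianPi ι).real {z | ∃ l ≠ k, u k ⬝ᵥ (u k + z) ≤ u l ⬝ᵥ (u k + z)} ≤
      Real.exp (-p ^ 2 / (2 * V)) + Fintype.card κ * Real.exp (-q ^ 2 / (2 * V)) := by
  have hsub : {z | ∃ l ≠ k, u k ⬝ᵥ (u k + z) ≤ u l ⬝ᵥ (u k + z)} ⊆
      {z | p ≤ -u k ⬝ᵥ z} ∪ ⋃ l, {z | q ≤ u l ⬝ᵥ z} := by
    rintro z ⟨l, hl, hle⟩
    have hgap' := hgap l hl
    simp only [dotProduct_add] at hle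
    simp only [Set.mem_union, Set.mem_ofPred_eq, Set.mem_iUnion, neg_dotProduct]
    by_contra! ⟨hp', hq'⟩
    linarith [hq' l]
  calc
    (gaussianPi ι).real {z | ∃ l ≠ k, u k ⬝ᵥ (u k + z) ≤ u l ⬝ᵥ (u k + z)} ≤
        (gaussianPi ι).real {z | p ≤ -u k ⬝ᵥ z} + ∑ l, (gaussianPi ι).real {z | q ≤ u l ⬝ᵥ z} :=
      (measureReal_mono hsub).trans
        ((measureReal_union_le _ _).trans (by gcongr; exact measureReal_iUnion_fintype_le _))
    _ ≤ Real.exp (-p ^ 2 / (2 * V)) + ∑ _ : κ, Real.exp (-q ^ 2 / (2 * V)) := by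
      gcongr with l
      · exact gaussianPi_real_le_dotProduct_le (by simpa using hV k) hp
      · exact gaussianPi_real_le_dotProduct_le (hV l) hq
    _ = _ := by simp

lemma sum_gaussianPi_real_decode_eq_le [MeasurableSpace κ] [MeasurableSingletonClass κ]
    {g : (ι → ℝ) → κ} (hg : Measurable g) {t : ℝ} (ht : 0 ≤ t) (hV : ∀ k, u k ⬝ᵥ u k ≤ V) :
    ∑ k, (gaussianPi ι).real {z | g (u k + z) = k} ≤
      Fintype.card κ * Real.exp (-t ^ 2 / (2 * V)) + Real.exp (t + V / 2) := by
  have hpartition : ∑ k, (gaussianPi ι).real (g ⁻¹' {k}) = 1 := by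
    simpa using sum_measureReal_preimage_singleton (μ := gaussianPi ι) Finset.univ fun k _ =>
      hg (measurableSet_singleton k)
  calc
    ∑ k, (gaussianPi ι).real {z | g (u k + z) = k} ≤
        ∑ k, (Real.exp (-t ^ 2 / (2 * V)) +
          Real.exp (t + V / 2) * (gaussianPi ι).real (g ⁻¹' {k})) := by
      gcongr with k
      refine (gaussianPi_real_const_add_mem_le (u k) (hg (measurableSet_singleton k)) t).trans ?_
      gcongr
      · exact gaussianPi_real_le_dotProduct_le (hV k) ht
      · exact hV k
    _ = _ := by
      rw [Finset.sum_add_distrib, ← Finset.mul_sum, hpartition]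
      simp

end GaussianChannel

section Decoupling

lemma exists_coloring_fin_three_of_apply_ne {ι : Type*} [Finite ι] (f : Equiv.Perm ι)
    (hf : ∀ i, f i ≠ i) : ∃ c : ι → Fin 3, ∀ i, c (f i) ≠ c i := by
  classical
  cases nonempty_fintype ι
  suffices h : ∀ s : Finset ι, ∃ c : ι → Fin 3, ∀ i ∈ s, f i ∈ s → c (f i) ≠ c i by
    simpa using h Finset.univ
  intro s
  induction s using Finset.induction_on with
  | empty => simp
  | insert a s ha ih =>
    obtain ⟨c, hc⟩ := ih
    obtain ⟨m, hm₁, hm₂⟩ : ∃ m, m ≠ c (f a) ∧ m ≠ c (f.symm a) :=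
      (by decide : ∀ p q : Fin 3, ∃ m, m ≠ p ∧ m ≠ q) _ _
    refine ⟨Function.update c a m, fun i hi hfi => ?_⟩
    obtain rfl | hia := eq_or_ne i a
    · simpa [hf i] using hm₁.symm
    obtain hfia | hfia := eq_or_ne (f i) a
    · obtain rfl := f.eq_symm_apply.2 hfia
      simpa [hia] using hm₂
    · simpa [hia, hfia] using
        hc i (Finset.mem_of_mem_insert_of_ne hi hia) (Finset.mem_of_mem_insert_of_ne hfi hfia)

variable {ι κ : Type*} [Fintype ι] [Fintype κ] {Ω : Type*} [MeasurableSpace Ω]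

lemma measurePreserving_pi_comp_of_injective (μ : Measure Ω) [IsProbabilityMeasure μ] {g : κ → ι}
    (hg : g.Injective) :
    MeasurePreserving (· ∘ g) (Measure.pi fun _ : ι => μ) (Measure.pi fun _ : κ => μ) where
  measurable := by fun_prop
  map_eq := by
    have hindep := (iIndepFun_pi (μ := fun _ : ι => μ) (X := fun _ y => y)
      fun _ => aemeasurable_id).precomp hg
    refine (hindep.map_fun_eq_pi_map fun k => (measurable_pi_apply (g k)).aemeasurable).trans ?_
    congr with k : 1
    exact (measurePreserving_eval (fun _ : ι => μ) (g k)).map_eq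

lemma measurePreserving_pi_comp_prodMk_comp (μ : Measure Ω) [IsProbabilityMeasure μ] {g h : κ → ι}
    (hgh : (Sum.elim g h).Injective) :
    MeasurePreserving (fun x => (x ∘ g, x ∘ h)) (Measure.pi fun _ : ι => μ)
      ((Measure.pi fun _ : κ => μ).prod (Measure.pi fun _ : κ => μ)) :=
  (measurePreserving_sumPiEquivProdPi fun _ : κ ⊕ κ => μ).comp
    (measurePreserving_pi_comp_of_injective μ hgh)

lemma integral_exp_mul_dotProduct_gaussianPi (r : ℝ) (x : κ → ℝ) :
    ∫ y, Real.exp (r * x ⬝ᵥ y) ∂gaussianPi κ = Real.exp (r ^ 2 / 2 * x ⬝ᵥ x) := by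
  have hint := integral_exp_dotProduct_gaussianPi (r • x)
  simp only [smul_dotProduct, dotProduct_smul, smul_eq_mul] at hint
  rw [hint]
  ring_nf

lemma integrable_exp_mul_dotProduct_prod_gaussianPi {r : ℝ} (hr : r ^ 2 < 1) :
    Integrable (fun p : (κ → ℝ) × (κ → ℝ) => Real.exp (r * p.1 ⬝ᵥ p.2))
      ((gaussianPi κ).prod (gaussianPi κ)) := by
  have hmeas : Measurable fun p : (κ → ℝ) × (κ → ℝ) => Real.exp (r * p.1 ⬝ᵥ p.2) := by
    unfold dotProduct
    fun_prop
  refine (integrable_prod_iff hmeas.aestronglyMeasurable).2 ⟨ae_of_all _ fun x => ?_, ?_⟩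
  · simpa only [smul_dotProduct, smul_eq_mul] using integrable_exp_dotProduct_gaussianPi (r • x)
  · simp only [Real.norm_eq_abs, Real.abs_exp, integral_exp_mul_dotProduct_gaussianPi]
    exact integrable_exp_mul_dotProduct_self_gaussianPi (by linarith)

lemma mgf_dotProduct_prod_gaussianPi_le {r : ℝ} (hr : r ^ 2 ≤ 1 / 2) :
    mgf (fun p : (κ → ℝ) × (κ → ℝ) => p.1 ⬝ᵥ p.2) ((gaussianPi κ).prod (gaussianPi κ)) r ≤
      Real.exp (Fintype.card κ * r ^ 2) := by
  rw [mgf, integral_prod _ (integrable_exp_mul_dotProduct_prod_gaussianPi (by linarith))]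
  simp only [integral_exp_mul_dotProduct_gaussianPi]
  refine (integral_exp_mul_dotProduct_self_gaussianPi_le ?_).trans ?_
  · rw [abs_of_nonneg (by positivity)]
    linarith
  · gcongr
    nlinarith [sq_nonneg r]

lemma prod_gaussianPi_real_le_dotProduct_le {r : ℝ} (hr₀ : 0 ≤ r) (hr : r ^ 2 ≤ 1 / 2) (t : ℝ) :
    ((gaussianPi κ).prod (gaussianPi κ)).real {p | t ≤ p.1 ⬝ᵥ p.2} ≤
      Real.exp (Fintype.card κ * r ^ 2 - r * t) := by
  rw [sub_eq_neg_add, Real.exp_add, ← neg_mul]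
  refine (measure_ge_le_exp_mul_mgf t hr₀
    (integrable_exp_mul_dotProduct_prod_gaussianPi (by linarith))).trans ?_
  gcongr
  exact mgf_dotProduct_prod_gaussianPi_le hr

lemma gaussianPi_real_le_comp_dotProduct_comp_le {g h : κ → ι} (hgh : (Sum.elim g h).Injective)
    {r : ℝ} (hr₀ : 0 ≤ r) (hr : r ^ 2 ≤ 1 / 2) (t : ℝ) :
    (gaussianPi ι).real {x | t ≤ (x ∘ g) ⬝ᵥ (x ∘ h)} ≤
      Real.exp (Fintype.card κ * r ^ 2 - r * t) := by
  have hmeas : MeasurableSet {p : (κ → ℝ) × (κ → ℝ) | t ≤ p.1 ⬝ᵥ p.2} :=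
    measurableSet_le measurable_const (by unfold dotProduct; fun_prop)
  exact ((measurePreserving_pi_comp_prodMk_comp _ hgh).measureReal_preimage
    hmeas.nullMeasurableSet).trans_le (prod_gaussianPi_real_le_dotProduct_le hr₀ hr t)

lemma gaussianPi_real_le_dotProduct_comp_perm_le {f : Equiv.Perm ι} (hf : ∀ i, f i ≠ i) {r : ℝ}
    (hr₀ : 0 ≤ r) (hr : r ^ 2 ≤ 1 / 2) (t : ℝ) :
    (gaussianPi ι).real {x | 3 * t ≤ x ⬝ᵥ (x ∘ f)} ≤
      3 * Real.exp (Fintype.card ι * r ^ 2 - r * t) := by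
  classical
  obtain ⟨c, hc⟩ := exists_coloring_fin_three_of_apply_ne f hf
  let g (m : Fin 3) : {i // c i = m} → ι := Subtype.val
  have hsplit (x : ι → ℝ) : x ⬝ᵥ (x ∘ f) = ∑ m, (x ∘ g m) ⬝ᵥ (x ∘ f ∘ g m) :=
    (Fintype.sum_fiberwise c fun i => x i * x (f i)).symm
  have hsub : {x : ι → ℝ | 3 * t ≤ x ⬝ᵥ (x ∘ f)} ⊆
      ⋃ m, {x | t ≤ (x ∘ g m) ⬝ᵥ (x ∘ f ∘ g m)} := by
    intro x hx
    simp only [Set.mem_iUnion, Set.mem_ofPred_eq, hsplit, Fin.sum_univ_three] at hx ⊢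
    by_contra! hlt
    linarith [hlt 0, hlt 1, hlt 2]
  have hclass (m : Fin 3) : (gaussianPi ι).real {x | t ≤ (x ∘ g m) ⬝ᵥ (x ∘ f ∘ g m)} ≤
      Real.exp (Fintype.card ι * r ^ 2 - r * t) := by
    have hinj : (Sum.elim (g m) (f ∘ g m)).Injective :=
      Subtype.val_injective.sumElim (f.injective.comp Subtype.val_injective)
        fun i j hij => hc j ((congrArg c hij).symm.trans (i.2.trans j.2.symm))
    refine (gaussianPi_real_le_comp_dotProduct_comp_le hinj hr₀ hr t).trans ?_
    gcongr
    exact Fintype.card_subtype_le _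
  calc
    (gaussianPi ι).real {x | 3 * t ≤ x ⬝ᵥ (x ∘ f)} ≤
        ∑ m, (gaussianPi ι).real {x | t ≤ (x ∘ g m) ⬝ᵥ (x ∘ f ∘ g m)} :=
      (measureReal_mono hsub).trans (measureReal_iUnion_fintype_le _)
    _ ≤ ∑ _ : Fin 3, Real.exp (Fintype.card ι * r ^ 2 - r * t) := by gcongr with m; exact hclass m
    _ = _ := by simp

end Decoupling

section TypicalTemplates

lemma gaussianPi_real_le_abs_dotProduct_self_sub_card_le {ι : Type*} [Fintype ι] {e : ℝ}
    (he₀ : 0 ≤ e) (he : e ≤ 2) :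
    (gaussianPi ι).real {x | e * Fintype.card ι ≤ |x ⬝ᵥ x - Fintype.card ι|} ≤
      2 * Real.exp (-(e ^ 2 / 16) * Fintype.card ι) := by
  set N : ℝ := (Fintype.card ι : ℝ) with hN
  have hupper : (gaussianPi ι).real {x | (1 + e) * N ≤ x ⬝ᵥ x} ≤
      Real.exp (-(e ^ 2 / 16) * N) := by
    refine (measure_ge_le_exp_mul_mgf (t := e / 8) _ (by positivity)
      (integrable_exp_mul_dotProduct_self_gaussianPi (by linarith))).trans
      ((mul_le_mul_of_nonneg_left (integral_exp_mul_dotProduct_self_gaussianPi_le ?_)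
        (Real.exp_nonneg _)).trans_eq ?_)
    · rw [abs_of_nonneg] <;> linarith
    · rw [← Real.exp_add, hN]
      ring_nf
  have hlower : (gaussianPi ι).real {x | x ⬝ᵥ x ≤ (1 - e) * N} ≤
      Real.exp (-(e ^ 2 / 16) * N) := by
    refine (measure_le_le_exp_mul_mgf (t := -e / 8) _ (by linarith)
      (integrable_exp_mul_dotProduct_self_gaussianPi (by linarith))).trans
      ((mul_le_mul_of_nonneg_left (integral_exp_mul_dotProduct_self_gaussianPi_le ?_)
        (Real.exp_nonneg _)).trans_eq ?_)
    · rw [abs_of_nonpos] <;> linarith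
    · rw [← Real.exp_add, hN]
      ring_nf
  have hsub : {x : ι → ℝ | e * N ≤ |x ⬝ᵥ x - N|} ⊆
      {x | (1 + e) * N ≤ x ⬝ᵥ x} ∪ {x | x ⬝ᵥ x ≤ (1 - e) * N} := by
    intro x hx
    simp only [Set.mem_union, Set.mem_ofPred_eq, le_abs] at hx ⊢
    exact hx.imp (fun _ => by linarith) fun _ => by linarith
  linarith [(measureReal_mono (μ := gaussianPi ι) hsub).trans (measureReal_union_le _ _)]

variable {G : Type*} [AddGroup G]

/-- The cyclic shift `R_l x` of a vector indexed by a finite group. -/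
def shift (x : G → ℝ) (l : G) : G → ℝ := fun i => x (i + l)

lemma shift_zero (x : G → ℝ) : shift x 0 = x := funext fun i => by simp [shift]

variable [Fintype G]

lemma shift_dotProduct_shift (x : G → ℝ) (l l' : G) :
    shift x l ⬝ᵥ shift x l' = x ⬝ᵥ shift x (-l + l') := by
  rw [dotProduct, ← Equiv.sum_comp (Equiv.addRight (-l))]
  simp [dotProduct, shift, add_assoc]

variable (G) in
/-- The templates whose energy is `card G` up to a relative error `e`, and whose correlation with
each of their nontrivial shifts is below `e * card G`. -/
def typicalSet (e : ℝ) : Set (G → ℝ) :=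
  {x | |x ⬝ᵥ x - Fintype.card G| < e * Fintype.card G ∧
    ∀ d ≠ 0, x ⬝ᵥ shift x d < e * Fintype.card G}

lemma gaussianPi_real_le_dotProduct_shift_le {d : G} (hd : d ≠ 0) {e : ℝ} (he₀ : 0 ≤ e)
    (he : e ≤ 1) :
    (gaussianPi G).real {x | e * Fintype.card G ≤ x ⬝ᵥ shift x d} ≤
      3 * Real.exp (-(e ^ 2 / 36) * Fintype.card G) := by
  have htail := gaussianPi_real_le_dotProduct_comp_perm_le (f := Equiv.addRight d) (by simpa)
    (by positivity : 0 ≤ e / 6) (by nlinarith) (e * Fintype.card G / 3)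
  rw [mul_div_cancel₀ _ three_ne_zero] at htail
  refine htail.trans_eq ?_
  ring_nf

lemma gaussianPi_real_typicalSet_compl_le {e : ℝ} (he₀ : 0 ≤ e) (he : e ≤ 1) :
    (gaussianPi G).real (typicalSet G e)ᶜ ≤
      5 * (Fintype.card G * Real.exp (-(e ^ 2 / 36) * Fintype.card G)) := by
  classical
  set N : ℝ := (Fintype.card G : ℝ)
  have hN : 1 ≤ N := Nat.one_le_cast.2 Fintype.card_pos
  have hsub : (typicalSet G e)ᶜ ⊆ {x | e * N ≤ |x ⬝ᵥ x - N|} ∪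
      ⋃ d : {d : G // d ≠ 0}, {x | e * N ≤ x ⬝ᵥ shift x d} := by
    intro x hx
    simp only [Set.mem_union, Set.mem_ofPred_eq, Set.mem_iUnion, Subtype.exists]
    by_contra! ⟨hnorm, hcorr⟩
    exact hx ⟨hnorm, hcorr⟩
  have hcard : (Fintype.card {d : G // d ≠ 0} : ℝ) ≤ N :=
    Nat.cast_le.2 (Fintype.card_subtype_le _)
  calc
    (gaussianPi G).real (typicalSet G e)ᶜ ≤ (gaussianPi G).real {x | e * N ≤ |x ⬝ᵥ x - N|} +
        ∑ d : {d : G // d ≠ 0}, (gaussianPi G).real {x | e * N ≤ x ⬝ᵥ shift x d} :=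
      (measureReal_mono hsub).trans
        ((measureReal_union_le _ _).trans (by gcongr; exact measureReal_iUnion_fintype_le _))
    _ ≤ 2 * Real.exp (-(e ^ 2 / 16) * N) +
        ∑ _ : {d : G // d ≠ 0}, 3 * Real.exp (-(e ^ 2 / 36) * N) := by
      gcongr with d
      · exact gaussianPi_real_le_abs_dotProduct_self_sub_card_le he₀ (by linarith)
      · exact gaussianPi_real_le_dotProduct_shift_le d.2 he₀ he
    _ ≤ 2 * (N * Real.exp (-(e ^ 2 / 36) * N)) + N * (3 * Real.exp (-(e ^ 2 / 36) * N)) := by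
      rw [Finset.sum_const, Finset.card_univ, nsmul_eq_mul]
      gcongr
      refine (Real.exp_le_exp.2 ?_).trans (le_mul_of_one_le_left (Real.exp_nonneg _) hN)
      nlinarith [mul_nonneg (sq_nonneg e) (zero_le_one.trans hN)]
    _ = _ := by ring

lemma tendsto_stdGaussian_real_typicalSet_compl {e : ℝ} (he₀ : 0 < e) (he : e ≤ 1) :
    Tendsto (fun k : ℕ => (stdGaussian (k + 1)).real (typicalSet (Fin (k + 1)) e)ᶜ) atTop
      (nhds 0) := by
  have hdecay : Tendsto (fun y : ℝ => 5 * (y * Real.exp (-(e ^ 2 / 36) * y))) atTop (nhds 0) := by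
    simpa using (tendsto_rpow_mul_exp_neg_mul_atTop_nhds_zero 1 (e ^ 2 / 36)
      (by positivity)).const_mul 5
  refine squeeze_zero (fun _ => measureReal_nonneg)
    (fun k => gaussianPi_real_typicalSet_compl_le he₀.le he) ?_
  simp only [Fintype.card_fin]
  exact hdecay.comp (tendsto_natCast_atTop_atTop.comp (tendsto_add_atTop_nat 1))

end TypicalTemplates

section ShiftCodebook

variable {G : Type*} [AddGroup G] [Fintype G] {x : G → ℝ} {e : ℝ}

lemma smul_shift_dotProduct_smul_shift (c : ℝ) (x : G → ℝ) (l l' : G) :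
    (c • shift x l) ⬝ᵥ (c • shift x l') = c ^ 2 * x ⬝ᵥ shift x (-l + l') := by
  rw [smul_dotProduct, dotProduct_smul, shift_dotProduct_shift, smul_smul, ← sq, smul_eq_mul]

lemma smul_shift_dotProduct_self_le (hx : x ∈ typicalSet G e) (c : ℝ) (l : G) :
    (c • shift x l) ⬝ᵥ (c • shift x l) ≤ (1 + e) * (c ^ 2 * Fintype.card G) := by
  have henergy : x ⬝ᵥ x ≤ (1 + e) * Fintype.card G := by linarith [(abs_lt.1 hx.1).2]
  rw [smul_shift_dotProduct_smul_shift, neg_add_cancel, shift_zero, mul_left_comm]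
  gcongr

lemma smul_shift_dotProduct_add_le (hx : x ∈ typicalSet G e) (c : ℝ) {l k : G} (hl : l ≠ k) :
    (c • shift x l) ⬝ᵥ (c • shift x k) + (1 - 2 * e) * (c ^ 2 * Fintype.card G) ≤
      (c • shift x k) ⬝ᵥ (c • shift x k) := by
  have hcorr := hx.2 (-l + k) (by simpa [neg_add_eq_zero] using hl)
  have hgap : x ⬝ᵥ shift x (-l + k) + (1 - 2 * e) * Fintype.card G ≤ x ⬝ᵥ x := by
    linarith [(abs_lt.1 hx.1).1]
  simp only [smul_shift_dotProduct_smul_shift, neg_add_cancel, shift_zero]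
  rw [mul_left_comm, ← mul_add]
  gcongr

variable {c a : ℝ}

lemma gaussianPi_real_exists_shift_dotProduct_le_le (hx : x ∈ typicalSet G e)
    (ha : c ^ 2 * Fintype.card G = a) (he₀ : 0 ≤ e) (he : e ≤ 1 / 3) (k : G) :
    (gaussianPi G).real {z | ∃ l ≠ k, (c • shift x k) ⬝ᵥ (c • shift x k + z) ≤
        (c • shift x l) ⬝ᵥ (c • shift x k + z)} ≤
      Real.exp (-(e ^ 2 / (2 * (1 + e)) * a)) +
        Fintype.card G * Real.exp (-((1 - 3 * e) ^ 2 / (2 * (1 + e)) * a)) := by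
  have ha₀ : 0 ≤ a := ha ▸ by positivity
  refine (gaussianPi_real_exists_dotProduct_add_le_le (u := fun l => c • shift x l)
    (fun l => ha ▸ smul_shift_dotProduct_self_le hx c l) (mul_nonneg he₀ ha₀)
    (mul_nonneg (by linarith : 0 ≤ 1 - 3 * e) ha₀) fun l hl => ?_).trans_eq ?_
  · linarith [ha ▸ smul_shift_dotProduct_add_le hx c hl]
  · clear ha
    congr 3 <;> field_simp

lemma sum_gaussianPi_real_decode_shift_eq_le [MeasurableSpace G] [MeasurableSingletonClass G]
    (hx : x ∈ typicalSet G e) (ha : c ^ 2 * Fintype.card G = a) {g : (G → ℝ) → G}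
    (hg : Measurable g) {t : ℝ} (ht : 0 ≤ t) :
    ∑ k, (gaussianPi G).real {z | g (c • shift x k + z) = k} ≤
      Fintype.card G * Real.exp (-t ^ 2 / (2 * ((1 + e) * a))) +
        Real.exp (t + (1 + e) * a / 2) :=
  sum_gaussianPi_real_decode_eq_le (u := fun l => c • shift x l) hg ht
    fun k => ha ▸ smul_shift_dotProduct_self_le hx c k

end ShiftCodebook

lemma prod_real_le_add_of_forall_notMem {Ω Ω' : Type*} [MeasurableSpace Ω] [MeasurableSpace Ω']
    {μ : Measure Ω} {ν : Measure Ω'} [IsProbabilityMeasure μ] [IsProbabilityMeasure ν]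
    {S : Set (Ω × Ω')} (hS : MeasurableSet S) {B : Set Ω} {b : ℝ} (hb₀ : 0 ≤ b)
    (hb : ∀ x ∉ B, ν.real (Prod.mk x ⁻¹' S) ≤ b) :
    (μ.prod ν).real S ≤ μ.real B + b := by
  have hsection (x : Ω) : ν (Prod.mk x ⁻¹' S) ≤
      (toMeasurable μ B).indicator 1 x + ENNReal.ofReal b := by
    by_cases hx : x ∈ toMeasurable μ B
    · simpa [hx] using prob_le_one.trans le_self_add
    · simpa [hx] using (ENNReal.le_ofReal_iff_toReal_le (measure_ne_top _ _) hb₀).2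
        (hb x fun h => hx (subset_toMeasurable μ B h))
  have hle : μ.prod ν S ≤ μ B + ENNReal.ofReal b := by
    rw [Measure.prod_apply hS]
    refine (lintegral_mono hsection).trans_eq ?_
    rw [lintegral_add_right _ measurable_const,
      lintegral_indicator_one (measurableSet_toMeasurable _ _)]
    simp
  simpa [Measure.real, ENNReal.toReal_add, hb₀] using ENNReal.toReal_mono (by finiteness) hle

section Model

instance (L : ℕ) : IsProbabilityMeasure (stdGaussian L) := by
  unfold stdGaussian
  infer_instance

lemma unifFin_prod_real {L : ℕ} {Ω : Type*} [MeasurableSpace Ω] (ν : Measure Ω) [IsFiniteMeasure ν]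
    {T : Set (Fin L × Ω)} (hT : MeasurableSet T) :
    ((unifFin L).prod ν).real T = (L : ℝ)⁻¹ * ∑ l, ν.real (Prod.mk l ⁻¹' T) := by
  rw [Measure.real, Measure.prod_apply hT, unifFin, lintegral_smul_measure, lintegral_count,
    tsum_fintype, smul_eq_mul, ENNReal.toReal_mul, ENNReal.toReal_sum fun _ _ => measure_ne_top _ _]
  simp [Measure.real]

lemma measurable_corr {L : ℕ} :
    Measurable fun p : ((Fin L → ℝ) × (Fin L → ℝ)) × Fin L => corr p.1.1 p.1.2 p.2 :=
  measurable_from_prod_countable_left fun l => by simp only [corr]; fun_prop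

variable {L : ℕ} [NeZero L]

instance : IsProbabilityMeasure (unifFin L) where
  measure_univ := by
    simp [unifFin, ENNReal.inv_mul_cancel (NeZero.ne (L : ℝ≥0∞)) (ENNReal.natCast_ne_top L)]

instance : IsProbabilityMeasure (tmBase L) := by
  unfold tmBase
  infer_instance

lemma tmBase_real_le {S : Set ((Fin L → ℝ) × Fin L × (Fin L → ℝ))} (hS : MeasurableSet S)
    {B : Set (Fin L → ℝ)} {b : ℝ} (hb₀ : 0 ≤ b)
    (hb : ∀ x ∉ B, ∑ l, (stdGaussian L).real {z | (x, l, z) ∈ S} ≤ L * b) :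
    (tmBase L).real S ≤ (stdGaussian L).real B + b := by
  refine prod_real_le_add_of_forall_notMem hS hb₀ fun x hx => ?_
  rw [unifFin_prod_real _ (hS.preimage measurable_prodMk_left),
    inv_mul_le_iff₀ (Nat.cast_pos.2 (NeZero.pos L))]
  exact hb x hx

lemma corr_eq_shift_dotProduct (x y : Fin L → ℝ) (l : Fin L) : corr x y l = shift x l ⬝ᵥ y := by
  rw [corr, ← Equiv.sum_comp (Equiv.addRight l)]
  simp [shift, dotProduct]

lemma tmY_eq_smul {s : ℝ} (hs : s ≠ 0) (x : Fin L → ℝ) (l : Fin L) (z : Fin L → ℝ) :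
    tmY L s (x, l, z) = s • (s⁻¹ • shift x l + z) := by
  rw [smul_add, smul_inv_smul₀ hs]
  rfl

lemma corr_smul_eq {s : ℝ} (hs : s ≠ 0) (x y : Fin L → ℝ) (l : Fin L) :
    corr x (s • y) l = s ^ 2 * (s⁻¹ • shift x l) ⬝ᵥ y := by
  rw [corr_eq_shift_dotProduct, dotProduct_smul, smul_dotProduct, smul_eq_mul, smul_eq_mul]
  field_simp

/-- The event that the correlation at the true shift is not strictly the largest one; it contains
the error event of every MAP estimator, whatever the tie-breaking rule. -/
def ambiguityEvent (L : ℕ) (s : ℝ) : Set ((Fin L → ℝ) × Fin L × (Fin L → ℝ)) :=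
  {ω | ∃ l ≠ ω.2.1, corr ω.1 (tmY L s ω) ω.2.1 ≤ corr ω.1 (tmY L s ω) l}

lemma mem_ambiguityEvent_iff {s : ℝ} (hs : s ≠ 0) (x : Fin L → ℝ) (l : Fin L) (z : Fin L → ℝ) :
    (x, l, z) ∈ ambiguityEvent L s ↔ ∃ l' ≠ l, (s⁻¹ • shift x l) ⬝ᵥ (s⁻¹ • shift x l + z) ≤
      (s⁻¹ • shift x l') ⬝ᵥ (s⁻¹ • shift x l + z) := by
  simp only [ambiguityEvent, Set.mem_ofPred_eq, tmY_eq_smul hs, corr_smul_eq hs,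
    mul_le_mul_iff_right₀ (by positivity : 0 < s ^ 2)]

lemma measurable_tmY (s : ℝ) : Measurable (tmY L s) := by
  have hshift : Measurable fun p : (Fin L → ℝ) × Fin L => shift p.1 p.2 :=
    measurable_from_prod_countable_left fun l => by unfold shift; fun_prop
  have hcoord (j : Fin L) := (measurable_pi_apply j).comp hshift
  exact measurable_pi_iff.2 fun j =>
    ((hcoord j).comp (measurable_fst.prodMk (measurable_fst.comp measurable_snd))).add (by fun_prop)

lemma measurableSet_ambiguityEvent (s : ℝ) : MeasurableSet (ambiguityEvent L s) := by
  have hshift : Measurable fun ω : (Fin L → ℝ) × Fin L × (Fin L → ℝ) => ω.2.1 := by fun_prop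
  have hcorr {f : (Fin L → ℝ) × Fin L × (Fin L → ℝ) → Fin L} (hf : Measurable f) :
      Measurable fun ω => corr ω.1 (tmY L s ω) (f ω) :=
    measurable_corr.comp ((measurable_fst.prodMk (measurable_tmY s)).prodMk hf)
  have hunion : ambiguityEvent L s = ⋃ l, {ω | ω.2.1 = l}ᶜ ∩
      {ω | corr ω.1 (tmY L s ω) ω.2.1 ≤ corr ω.1 (tmY L s ω) l} := by
    ext ω
    simp [ambiguityEvent, eq_comm]
  rw [hunion]
  exact MeasurableSet.iUnion fun l => (measurableSet_eq_fun hshift measurable_const).compl.inter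
    (measurableSet_le (hcorr hshift) (hcorr measurable_const))

lemma measurableSet_decode_eq (s : ℝ) {est : (Fin L → ℝ) × (Fin L → ℝ) → Fin L}
    (hest : Measurable est) : MeasurableSet {ω | est (ω.1, tmY L s ω) = ω.2.1} :=
  measurableSet_eq_fun (hest.comp (measurable_fst.prodMk (measurable_tmY s)))
    (measurable_fst.comp measurable_snd)

end Model

section Bounds

variable {L : ℕ} {α e : ℝ}

lemma sigmaAlpha_pos (hL : 2 ≤ L) (hα : 0 < α) : 0 < sigmaAlpha L α := by
  have hlog : 0 < Real.log L := Real.log_pos (by exact_mod_cast hL)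
  unfold sigmaAlpha
  positivity

lemma inv_sigmaAlpha_sq_mul (hL : L ≠ 0) (hα : 0 ≤ α) :
    (sigmaAlpha L α)⁻¹ ^ 2 * L = α * Real.log L := by
  have := Real.log_natCast_nonneg L
  rw [sigmaAlpha, inv_pow, Real.sq_sqrt (by positivity), inv_div,
    div_mul_cancel₀ _ (Nat.cast_ne_zero.2 hL)]

variable [NeZero L]

lemma tmBase_real_ambiguityEvent_le (hL : 2 ≤ L) (hα : 0 < α) (he₀ : 0 ≤ e) (he : e ≤ 1 / 3) :
    (tmBase L).real (ambiguityEvent L (sigmaAlpha L α)) ≤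
      (stdGaussian L).real (typicalSet (Fin L) e)ᶜ +
        ((L : ℝ) ^ (-(e ^ 2 / (2 * (1 + e)) * α)) +
          (L : ℝ) ^ (-((1 - 3 * e) ^ 2 / (2 * (1 + e)) * α - 1))) := by
  have hL₀ : (0 : ℝ) < L := Nat.cast_pos.2 (NeZero.pos L)
  refine tmBase_real_le (measurableSet_ambiguityEvent _) (by positivity) fun x hx => ?_
  rw [Set.notMem_compl_iff] at hx
  simp only [mem_ambiguityEvent_iff (sigmaAlpha_pos hL hα).ne']
  refine (Finset.sum_le_card_nsmul _ _ _ fun l _ => gaussianPi_real_exists_shift_dotProduct_le_le hx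
    (by rw [Fintype.card_fin, inv_sigmaAlpha_sq_mul (NeZero.ne L) hα.le]) he₀ he l).trans_eq ?_
  rw [Finset.card_univ, Fintype.card_fin, nsmul_eq_mul, neg_sub, Real.rpow_sub hL₀,
    Real.rpow_one, Real.rpow_neg hL₀.le, Real.rpow_def_of_pos hL₀, Real.rpow_def_of_pos hL₀,
    ← Real.exp_neg, div_eq_mul_inv (L : ℝ), ← Real.exp_neg]
  ring_nf

-- The change of measure is cut off at deviation `t = e * log L`.
lemma tmBase_real_decode_eq_le (hL : 2 ≤ L) (hα : 0 < α) (he₀ : 0 ≤ e)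
    {est : (Fin L → ℝ) × (Fin L → ℝ) → Fin L} (hest : Measurable est) :
    (tmBase L).real {ω | est (ω.1, tmY L (sigmaAlpha L α) ω) = ω.2.1} ≤
      (stdGaussian L).real (typicalSet (Fin L) e)ᶜ +
        ((L : ℝ) ^ (-(e ^ 2 / (2 * (1 + e) * α))) + (L : ℝ) ^ (-(1 - (e + (1 + e) * α / 2)))) := by
  have hL₀ : (0 : ℝ) < L := Nat.cast_pos.2 (NeZero.pos L)
  have hlog : 0 < Real.log L := Real.log_pos (by exact_mod_cast hL)
  refine tmBase_real_le (measurableSet_decode_eq _ hest) (by positivity) fun x hx => ?_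
  rw [Set.notMem_compl_iff] at hx
  simp only [Set.mem_ofPred_eq, tmY_eq_smul (sigmaAlpha_pos hL hα).ne']
  refine (sum_gaussianPi_real_decode_shift_eq_le
    (g := fun y => est (x, sigmaAlpha L α • y)) (t := e * Real.log L) hx
    (by rw [Fintype.card_fin, inv_sigmaAlpha_sq_mul (NeZero.ne L) hα.le])
    (by fun_prop) (by positivity)).trans_eq ?_
  rw [Fintype.card_fin, neg_sub, mul_add, Real.rpow_sub hL₀, Real.rpow_one,
    mul_div_cancel₀ _ hL₀.ne', Real.rpow_def_of_pos hL₀, Real.rpow_def_of_pos hL₀]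
  congr 3
  · field_simp
  · ring

end Bounds

section Threshold

variable {α : ℝ}

lemma tendsto_natCast_add_one_rpow_neg {c : ℝ} (hc : 0 < c) :
    Tendsto (fun k : ℕ => ((k + 1 : ℕ) : ℝ) ^ (-c)) atTop (nhds 0) :=
  (tendsto_rpow_neg_atTop hc).comp (tendsto_natCast_atTop_atTop.comp (tendsto_add_atTop_nat 1))

lemma tendsto_zero_of_real_le_typicalSet_compl_add_rpow
    {S : ∀ k : ℕ, Set ((Fin (k + 1) → ℝ) × Fin (k + 1) × (Fin (k + 1) → ℝ))} {e c₁ c₂ : ℝ}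
    (he₀ : 0 < e) (he : e ≤ 1) (hc₁ : 0 < c₁) (hc₂ : 0 < c₂)
    (hS : ∀ k ≥ 1, (tmBase (k + 1)).real (S k) ≤
      (stdGaussian (k + 1)).real (typicalSet (Fin (k + 1)) e)ᶜ +
        (((k + 1 : ℕ) : ℝ) ^ (-c₁) + ((k + 1 : ℕ) : ℝ) ^ (-c₂))) :
    Tendsto (fun k => tmBase (k + 1) (S k)) atTop (nhds 0) := by
  refine (ENNReal.tendsto_toReal_iff (fun _ => measure_ne_top _ _) ENNReal.zero_ne_top).1 ?_
  refine squeeze_zero' (Eventually.of_forall fun _ => measureReal_nonneg)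
    ((eventually_ge_atTop 1).mono hS) ?_
  simpa using (tendsto_stdGaussian_real_typicalSet_compl he₀ he).add
    ((tendsto_natCast_add_one_rpow_neg hc₁).add (tendsto_natCast_add_one_rpow_neg hc₂))

theorem tendsto_tmBase_ambiguityEvent (hα : 2 < α) :
    Tendsto (fun k => tmBase (k + 1) (ambiguityEvent (k + 1) (sigmaAlpha (k + 1) α))) atTop
      (nhds 0) := by
  have hα₀ : 0 < α := by linarith
  obtain ⟨e, he₀, he, hgap⟩ : ∃ e > 0, e ≤ 1 / 3 ∧ e * (6 * α + 2) < α - 2 :=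
    ⟨(α - 2) / (7 * α), by positivity, by rw [div_le_iff₀] <;> nlinarith, by
      rw [div_mul_eq_mul_div, div_lt_iff₀] <;> nlinarith⟩
  refine tendsto_zero_of_real_le_typicalSet_compl_add_rpow he₀ (by linarith) ?_ ?_ fun k hk =>
    tmBase_real_ambiguityEvent_le (by omega) hα₀ he₀.le he
  · positivity
  · rw [sub_pos, div_mul_eq_mul_div, lt_div_iff₀ (by positivity)]
    nlinarith [mul_nonneg (sq_nonneg e) hα₀.le]

theorem tendsto_tmBase_decode_eq (hα₀ : 0 < α) (hα : α < 2)
    {est : ∀ k : ℕ, (Fin (k + 1) → ℝ) × (Fin (k + 1) → ℝ) → Fin (k + 1)}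
    (hest : ∀ k, Measurable (est k)) :
    Tendsto (fun k => tmBase (k + 1)
      {ω | est k (ω.1, tmY (k + 1) (sigmaAlpha (k + 1) α) ω) = ω.2.1}) atTop (nhds 0) := by
  obtain ⟨e, he₀, he, hgap⟩ : ∃ e > 0, e ≤ 1 ∧ e + (1 + e) * α / 2 < 1 :=
    ⟨(2 - α) / 8, by linarith, by linarith, by nlinarith⟩
  exact tendsto_zero_of_real_le_typicalSet_compl_add_rpow he₀ he (by positivity) (sub_pos.2 hgap)
    fun k hk => tmBase_real_decode_eq_le (by omega) hα₀ he₀.le (hest k)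

theorem template_matching_sharp_threshold_general
    (est : ∀ k : ℕ, (Fin (k + 1) → ℝ) × (Fin (k + 1) → ℝ) → Fin (k + 1)) :
    (2 < α → (∀ k (x y : Fin (k + 1) → ℝ) (l : Fin (k + 1)), corr x y l ≤ corr x y (est k (x, y))) →
      Tendsto (fun k => tmBase (k + 1)
        {ω | est k (ω.1, tmY (k + 1) (sigmaAlpha (k + 1) α) ω) ≠ ω.2.1}) atTop (nhds 0)) ∧
    (0 < α → α < 2 → (∀ k, Measurable (est k)) →
      Tendsto (fun k => tmBase (k + 1)
        {ω | est k (ω.1, tmY (k + 1) (sigmaAlpha (k + 1) α) ω) ≠ ω.2.1}) atTop (nhds 1)) := by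
  refine ⟨fun hα hmax => ?_, fun hα₀ hα hest => ?_⟩
  · exact tendsto_of_tendsto_of_tendsto_of_le_of_le tendsto_const_nhds
      (tendsto_tmBase_ambiguityEvent hα) (fun _ => zero_le)
      fun k => measure_mono fun ω hω => ⟨_, hω, hmax k _ _ _⟩
  · simp only [← Set.compl_ofPred, prob_compl_eq_one_sub (measurableSet_decode_eq _ (hest _))]
    simpa using ENNReal.Tendsto.sub tendsto_const_nhds (tendsto_tmBase_decode_eq hα₀ hα hest)
      (.inl ENNReal.one_ne_top)

end Threshold

/-- sharp threshold for template matching with `σ² = L/(α log L)`.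
For any (ties broken arbitrarily) measurable MAP estimators
`est_L (x, y) ∈ argmax_{ℓ'} ⟨x, R_{ℓ'}⁻¹ y⟩`, the error probability
`p_e = Pr(est(X, Y) ≠ ℓ)` satisfies: `p_e → 0` if `α > 2`, and `p_e → 1` if `α < 2`.
(Dimension is written as `k+1` so that the estimator is well-defined.) -/
theorem template_matching_sharp_threshold (α : ℝ) (hα0 : 0 < α)
    (est : ∀ k : ℕ, ((Fin (k + 1) → ℝ) × (Fin (k + 1) → ℝ)) → Fin (k + 1))
    (hmeas : ∀ k, Measurable (est k))
    (hmax : ∀ k (x y : Fin (k + 1) → ℝ) (ℓ' : Fin (k + 1)),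
      corr x y ℓ' ≤ corr x y (est k (x, y))) :
    (2 < α → Tendsto (fun k : ℕ =>
        tmBase (k + 1)
          {ω | est k (ω.1, tmY (k + 1) (sigmaAlpha (k + 1) α) ω) ≠ ω.2.1})
        atTop (nhds 0)) ∧
    (α < 2 → Tendsto (fun k : ℕ =>
        tmBase (k + 1)
          {ω | est k (ω.1, tmY (k + 1) (sigmaAlpha (k + 1) α) ω) ≠ ω.2.1})
        atTop (nhds 1)) := by
  have hgeneral := template_matching_sharp_threshold_general (α := α) est
  exact ⟨fun hα => hgeneral.1 hα hmax, fun hα => hgeneral.2 hα0 hα hmeas⟩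

end MRAformal
end

section
/- Mutual information bound via the shift-free channel: in the MRA model, the mutual information between the signal and all n measurements satisfies I(X; Y^n) ≤ (L/2)·log(1 + n/σ²), where Y^n = (Y_1,…,Y_n). -/
open MeasureTheory ProbabilityTheory Filter
open scoped ENNReal

namespace MRAformal

/-- Alignment distortion `ρ(x, x̂) = L⁻¹ min_ℓ ‖x - R_ℓ x̂‖²`,
where `(R_ℓ x̂)_j = x̂_{j+ℓ mod L}`. -/
noncomputable def rho (L : ℕ) (x xh : Fin L → ℝ) : ℝ :=
  (L : ℝ)⁻¹ * ⨅ ℓ : Fin L, ∑ j, (x j - xh (j + ℓ)) ^ 2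

/-- Base probability space for the MRA model with `n` samples:
the signal `X`, the i.i.d. uniform shifts `ℓ_i`, and the i.i.d. Gaussian noises `Z_i`. -/
noncomputable def mraBase (L n : ℕ) :
    Measure ((Fin L → ℝ) × (Fin n → Fin L) × (Fin n → Fin L → ℝ)) :=
  (stdGaussian L).prod ((Measure.pi fun _ => unifFin L).prod (Measure.pi fun _ => stdGaussian L))

/-- The measurements `Y_i = R_{ℓ_i} X + σ Z_i`. -/
def mraY (L n : ℕ) (σ : ℝ) (ω : (Fin L → ℝ) × (Fin n → Fin L) × (Fin n → Fin L → ℝ)) :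
    Fin n → Fin L → ℝ :=
  fun i j => ω.1 (j + ω.2.1 i) + σ * ω.2.2 i j

/-- `MSE*_MRA(L, σ², n)`: the infimum over measurable estimators `X̂(Y_1,…,Y_n)` of `E ρ(X, X̂)`.
Here `σ` is the noise standard deviation. -/
noncomputable def MSEstarMRA (L n : ℕ) (σ : ℝ) : ℝ :=
  sInf { e : ℝ | ∃ f : (Fin n → Fin L → ℝ) → (Fin L → ℝ), Measurable f ∧
    e = ∫ ω, rho L ω.1 (f (mraY L n σ ω)) ∂(mraBase L n) }

/-- `n*_MRA(L, σ², ε) = min {n : MSE*_MRA(L, σ², n) ≤ ε}`. -/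
noncomputable def nstarMRA (L : ℕ) (σ ε : ℝ) : ℕ :=
  sInf { n : ℕ | MSEstarMRA L n σ ≤ ε }

/-- `n*_MRA(L, α, ε) := n*_MRA(L, σ²(α), ε)`. -/
noncomputable def nstarMRAa (L : ℕ) (α ε : ℝ) : ℕ :=
  nstarMRA L (sigmaAlpha L α) ε

/-- Mutual information `I(U; V)`: the Kullback–Leibler divergence of the joint law with
respect to the product of its marginals (natural logarithm), expressed as the integral of
the log of the Radon–Nikodym derivative. -/
noncomputable def mutualInfo {α β : Type*} [MeasurableSpace α] [MeasurableSpace β]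
    (μ : Measure (α × β)) : ℝ :=
  ∫ p, Real.log ((μ.rnDeriv ((μ.map Prod.fst).prod (μ.map Prod.snd))) p).toReal ∂μ

/-- Joint law of `(X, (Y_1,…,Y_n))` in the MRA model. -/
noncomputable def mraJoint (L n : ℕ) (σ : ℝ) :
    Measure ((Fin L → ℝ) × (Fin n → Fin L → ℝ)) :=
  (mraBase L n).map fun ω => (ω.1, mraY L n σ ω)

/-- Joint law of `(X, Y)` for a single MRA measurement `Y = R_ℓ X + σ Z`. -/
noncomputable def mraJoint1 (L : ℕ) (σ : ℝ) : Measure ((Fin L → ℝ) × (Fin L → ℝ)) :=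
  ((stdGaussian L).prod ((unifFin L).prod (stdGaussian L))).map
    fun ω => (ω.1, fun j => ω.1 (j + ω.2.1) + σ * ω.2.2 j)

/-!
The `Y_i` can be regenerated from one observation `S = (√n / σ) X + ξ` of the unshifted signal in
white Gaussian noise: replacing the empirical mean of `n` white noise vectors by an independent
`ξ / √n` does not change their joint law, and the `n` observations `X + σ Z_i` built from such
noises involve `X` and `ξ` only through `S`. The shifts can be applied after the noise is added
because white noise is shift invariant. By data processing `I(X; Y^n) ≤ I(X; S)`, and `S` consists
of `L` independent scalar Gaussian channels with signal-to-noise ratio `n / σ²`.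
-/

section KullbackLeibler

open InformationTheory

variable {α β : Type*} [MeasurableSpace α] [MeasurableSpace β]

lemma klDiv_map_measurableEquiv (μ ν : Measure α) [IsFiniteMeasure μ] [IsFiniteMeasure ν]
    (e : α ≃ᵐ β) : klDiv (μ.map e) (ν.map e) = klDiv μ ν := by
  refine (klDiv_map_le μ ν e.measurable).antisymm ?_
  simpa only [MeasurableEquiv.map_symm_map] using
    klDiv_map_le (μ.map e) (ν.map e) e.symm.measurable

lemma klDiv_prod_right (μ ν : Measure α) [IsFiniteMeasure μ] [IsFiniteMeasure ν] (ρ : Measure β)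
    [IsProbabilityMeasure ρ] :
    klDiv (μ.prod ρ) (ν.prod ρ) = klDiv μ ν := by
  simp only [← Measure.compProd_const, klDiv_compProd_left]

lemma klDiv_prod_left (ρ : Measure α) [IsProbabilityMeasure ρ] (μ ν : Measure β)
    [IsFiniteMeasure μ] [IsFiniteMeasure ν] :
    klDiv (ρ.prod μ) (ρ.prod ν) = klDiv μ ν := by
  rw [← klDiv_prod_right μ ν ρ, ← klDiv_map_measurableEquiv _ _ MeasurableEquiv.prodComm]
  simp only [MeasurableEquiv.prodComm, MeasurableEquiv.coe_mk, Equiv.coe_prodComm,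
    Measure.prod_swap]

lemma klDiv_prod (μ₁ ν₁ : Measure α) (μ₂ ν₂ : Measure β) [IsProbabilityMeasure μ₁]
    [IsFiniteMeasure ν₁] [IsProbabilityMeasure μ₂] [IsProbabilityMeasure ν₂] :
    klDiv (μ₁.prod μ₂) (ν₁.prod ν₂) = klDiv μ₁ ν₁ + klDiv μ₂ ν₂ := by
  rw [← klDiv_prod_left μ₁ μ₂ ν₂]
  simp only [← Measure.compProd_const]
  exact klDiv_compProd_eq_add _ _ _ _

lemma klDiv_pi {ι : Type*} [Fintype ι] {α : ι → Type*} [∀ i, MeasurableSpace (α i)]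
    (μ ν : ∀ i, Measure (α i)) [∀ i, IsProbabilityMeasure (μ i)] [∀ i, IsProbabilityMeasure (ν i)] :
    klDiv (Measure.pi μ) (Measure.pi ν) = ∑ i, klDiv (μ i) (ν i) := by
  refine Fintype.induction_empty_option (P := fun ι _ => ∀ {α : ι → Type _}
    [∀ i, MeasurableSpace (α i)] (μ ν : ∀ i, Measure (α i)) [∀ i, IsProbabilityMeasure (μ i)]
    [∀ i, IsProbabilityMeasure (ν i)],
    klDiv (Measure.pi μ) (Measure.pi ν) = ∑ i, klDiv (μ i) (ν i)) ?_ ?_ ?_ ι μ ν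
  · intro ι₁ ι₂ _ e ih α _ μ ν _ _
    let := Fintype.ofEquiv ι₂ e.symm
    rw [← (measurePreserving_piCongrLeft μ e).map_eq, ← (measurePreserving_piCongrLeft ν e).map_eq,
      klDiv_map_measurableEquiv, ih, e.sum_comp fun i => klDiv (μ i) (ν i)]
  · intro α _ μ ν _ _
    rw [Subsingleton.elim μ ν, klDiv_self, Fintype.sum_empty]
  · intro ι₁ _ ih α _ μ ν _ _
    rw [← Measure.pi_map_piOptionEquivProd μ, ← Measure.pi_map_piOptionEquivProd ν,
      klDiv_map_measurableEquiv, klDiv_prod, ih, Fintype.sum_option, add_comm]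

lemma klDiv_eq_ofReal_integral {μ ν : Measure α} [IsProbabilityMeasure μ]
    [IsProbabilityMeasure ν] {f : α → ℝ} (hf : Measurable f)
    (hdens : μ = ν.withDensity fun a => ENNReal.ofReal (Real.exp (f a))) (hint : Integrable f μ) :
    klDiv μ ν = ENNReal.ofReal (∫ a, f a ∂μ) := by
  have hac : μ ≪ ν := hdens ▸ withDensity_absolutelyContinuous _ _
  have hrn : μ.rnDeriv ν =ᵐ[ν] fun a => ENNReal.ofReal (Real.exp (f a)) :=
    hdens ▸ Measure.rnDeriv_withDensity ν hf.exp.ennreal_ofReal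
  have hllr : llr μ ν =ᵐ[μ] f := by
    filter_upwards [hac.ae_le hrn] with a ha
    rw [llr, ha, ENNReal.toReal_ofReal (Real.exp_pos _).le, Real.log_exp]
  rw [klDiv_of_ac_of_integrable hac (hint.congr hllr.symm), integral_congr_ae hllr, probReal_univ,
    probReal_univ, add_sub_cancel_right]

end KullbackLeibler

/-- The mutual information of a joint law, as an extended nonnegative divergence; unlike
`mutualInfo` it takes the value `∞`, instead of `0`, when the defining integral diverges. -/
noncomputable def klMutualInfo {α β : Type*} [MeasurableSpace α] [MeasurableSpace β]
    (μ : Measure (α × β)) : ℝ≥0∞ :=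
  InformationTheory.klDiv μ (μ.fst.prod μ.snd)

section MutualInformation

open InformationTheory

variable {α β γ δ : Type*} [MeasurableSpace α] [MeasurableSpace β] [MeasurableSpace γ]
  [MeasurableSpace δ]

lemma mutualInfo_le_of_klMutualInfo_le {μ : Measure (α × β)} [IsProbabilityMeasure μ] {r : ℝ}
    (hr : 0 ≤ r) (h : klMutualInfo μ ≤ ENNReal.ofReal r) : mutualInfo μ ≤ r := by
  have hac : μ ≪ μ.fst.prod μ.snd :=
    (klDiv_ne_top_iff.1 (h.trans_lt ENNReal.ofReal_lt_top).ne).1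
  have heq : mutualInfo μ = (klMutualInfo μ).toReal :=
    (toReal_klDiv_of_measure_eq hac (by simp)).symm
  exact heq ▸ ENNReal.toReal_le_of_le_ofReal hr h

/-- Data processing, with `ρ` the law of the randomness used to process the second variable. -/
lemma klMutualInfo_map_snd_le (μ : Measure (α × β)) [IsFiniteMeasure μ] (ρ : Measure γ)
    [IsProbabilityMeasure ρ] {g : β × γ → δ} (hg : Measurable g) :
    klMutualInfo ((μ.prod ρ).map fun p => (p.1.1, g (p.1.2, p.2))) ≤ klMutualInfo μ := by
  have hG : Measurable fun p : (α × β) × γ => (p.1.1, g (p.1.2, p.2)) := by fun_prop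
  have hfst : ((μ.prod ρ).map fun p => (p.1.1, g (p.1.2, p.2))).fst = μ.fst := by
    rw [Measure.fst, Measure.map_map measurable_fst hG]
    exact (Measure.map_map measurable_fst measurable_fst).symm.trans
      (congrArg Measure.fst (Measure.fst_prod (μ := μ) (ν := ρ)))
  have hsnd : ((μ.prod ρ).map fun p => (p.1.1, g (p.1.2, p.2))).snd = (μ.snd.prod ρ).map g := by
    have hsnd_prod : μ.snd.prod ρ = (μ.prod ρ).map (Prod.map Prod.snd id) := by
      rw [← Measure.map_prod_map μ ρ measurable_snd measurable_id, Measure.map_id]; rfl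
    rw [hsnd_prod, Measure.snd, Measure.map_map measurable_snd hG,
      Measure.map_map hg (measurable_snd.prodMap measurable_id)]
    rfl
  have hprod : μ.fst.prod ((μ.snd.prod ρ).map g) =
      ((μ.fst.prod μ.snd).prod ρ).map fun p => (p.1.1, g (p.1.2, p.2)) := by
    rw [← (measurePreserving_prodAssoc μ.fst μ.snd ρ).symm.map_eq,
      Measure.map_map hG (MeasurableEquiv.measurable _)]
    nth_rw 1 [← Measure.map_id (μ := μ.fst)]
    exact Measure.map_prod_map _ _ measurable_id hg
  calc klMutualInfo ((μ.prod ρ).map fun p => (p.1.1, g (p.1.2, p.2)))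
      = klDiv ((μ.prod ρ).map fun p => (p.1.1, g (p.1.2, p.2)))
          (((μ.fst.prod μ.snd).prod ρ).map fun p => (p.1.1, g (p.1.2, p.2))) := by
        rw [klMutualInfo, hfst, hsnd, hprod]
    _ ≤ klDiv (μ.prod ρ) ((μ.fst.prod μ.snd).prod ρ) := klDiv_map_le _ _ hG
    _ = klMutualInfo μ := klDiv_prod_right _ _ ρ

lemma klMutualInfo_pi {ι : Type*} [Fintype ι] (μ : ι → Measure (α × β))
    [∀ i, IsProbabilityMeasure (μ i)] :
    klMutualInfo ((Measure.pi μ).map (MeasurableEquiv.arrowProdEquivProdArrow α β ι)) =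
      ∑ i, klMutualInfo (μ i) := by
  have hfst : ((Measure.pi μ).map (MeasurableEquiv.arrowProdEquivProdArrow α β ι)).fst =
      Measure.pi fun i => (μ i).fst := by
    rw [Measure.fst, Measure.map_map measurable_fst (MeasurableEquiv.measurable _)]
    exact (measurePreserving_pi μ (fun i => (μ i).fst) fun _ => ⟨measurable_fst, rfl⟩).map_eq
  have hsnd : ((Measure.pi μ).map (MeasurableEquiv.arrowProdEquivProdArrow α β ι)).snd =
      Measure.pi fun i => (μ i).snd := by
    rw [Measure.snd, Measure.map_map measurable_snd (MeasurableEquiv.measurable _)]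
    exact (measurePreserving_pi μ (fun i => (μ i).snd) fun _ => ⟨measurable_snd, rfl⟩).map_eq
  rw [klMutualInfo, hfst, hsnd, ← (measurePreserving_arrowProdEquivProdArrow α β ι
    (fun i => (μ i).fst) (fun i => (μ i).snd)).map_eq, klDiv_map_measurableEquiv, klDiv_pi]
  rfl

end MutualInformation

section GaussianChannel

/-- The joint law of `(X, bX + Z)` for independent `X ∼ μ` and `Z ∼ ν`: a signal observed with gain
`b` in additive noise. -/
noncomputable def noisyCopyLaw {E : Type*} [MeasurableSpace E] [Add E] [SMul ℝ E]
    (μ ν : Measure E) (b : ℝ) : Measure (E × E) :=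
  (μ.prod ν).map fun p => (p.1, b • p.1 + p.2)

instance {E : Type*} [MeasurableSpace E] [Add E] [SMul ℝ E] [MeasurableAdd₂ E]
    [MeasurableConstSMul ℝ E] (μ ν : Measure E) [IsProbabilityMeasure μ] [IsProbabilityMeasure ν]
    (b : ℝ) : IsProbabilityMeasure (noisyCopyLaw μ ν b) :=
  Measure.isProbabilityMeasure_map (by fun_prop)

lemma noisyCopyLaw_pi {ι : Type*} [Fintype ι] {E : Type*} [MeasurableSpace E] [AddCommMonoid E]
    [Module ℝ E] [MeasurableAdd₂ E] [MeasurableConstSMul ℝ E] (μ ν : ι → Measure E)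
    [∀ i, IsProbabilityMeasure (μ i)] [∀ i, IsProbabilityMeasure (ν i)] (b : ℝ) :
    noisyCopyLaw (Measure.pi μ) (Measure.pi ν) b =
      (Measure.pi fun i => noisyCopyLaw (μ i) (ν i) b).map
        (MeasurableEquiv.arrowProdEquivProdArrow E E ι) := by
  have hmeas : Measurable fun p : E × E => (p.1, b • p.1 + p.2) := by fun_prop
  have (i : ι) := Measure.isProbabilityMeasure_map (μ := (μ i).prod (ν i)) hmeas.aemeasurable
  simp only [noisyCopyLaw]
  rw [← (measurePreserving_arrowProdEquivProdArrow E E ι μ ν).map_eq,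
    ← Measure.pi_map_pi fun _ => hmeas.aemeasurable,
    Measure.map_map (by fun_prop) (MeasurableEquiv.measurable _),
    Measure.map_map (MeasurableEquiv.measurable _) (by fun_prop)]
  rfl

lemma gaussianReal_withDensity_ratio (m₁ m₂ : ℝ) {v₁ v₂ : NNReal} (h₁ : v₁ ≠ 0) (h₂ : v₂ ≠ 0) :
    (gaussianReal m₂ v₂).withDensity (fun y => ENNReal.ofReal (Real.exp
      (Real.log (gaussianPDFReal m₁ v₁ y) - Real.log (gaussianPDFReal m₂ v₂ y)))) =
      gaussianReal m₁ v₁ := by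
  rw [gaussianReal_of_var_ne_zero _ h₁, gaussianReal_of_var_ne_zero _ h₂,
    ← withDensity_mul _ (measurable_gaussianPDF _ _) (by fun_prop)]
  congr 1 with y
  have hp₁ := gaussianPDFReal_pos m₁ v₁ y h₁
  have hp₂ := gaussianPDFReal_pos m₂ v₂ y h₂
  rw [Pi.mul_apply, gaussianPDF, gaussianPDF, ← ENNReal.ofReal_mul hp₂.le, Real.exp_sub,
    Real.exp_log hp₁, Real.exp_log hp₂, mul_div_cancel₀ _ hp₂.ne']

lemma log_gaussianPDFReal (m : ℝ) {v : NNReal} (hv : v ≠ 0) (y : ℝ) :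
    Real.log (gaussianPDFReal m v y) =
      -(Real.log (2 * Real.pi * v) / 2) - (y - m) ^ 2 / (2 * v) := by
  have : (0 : ℝ) < v := by positivity
  rw [gaussianPDFReal, Real.log_mul (by positivity) (Real.exp_pos _).ne', Real.log_exp,
    Real.log_inv, Real.log_sqrt (by positivity)]
  ring

lemma noisyCopyLaw_fst {E : Type*} [MeasurableSpace E] [Add E] [SMul ℝ E] [MeasurableAdd₂ E]
    [MeasurableConstSMul ℝ E] (μ ν : Measure E) [IsProbabilityMeasure ν] (b : ℝ) :
    (noisyCopyLaw μ ν b).fst = μ := by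
  rw [noisyCopyLaw, Measure.fst, Measure.map_map measurable_fst (by fun_prop)]
  exact Measure.fst_prod

lemma noisyCopyLaw_snd_gaussianReal (m₁ m₂ : ℝ) (v₁ v₂ : NNReal) (b : ℝ) :
    (noisyCopyLaw (gaussianReal m₁ v₁) (gaussianReal m₂ v₂) b).snd =
      gaussianReal (b * m₁ + m₂) (.mk (b ^ 2) (sq_nonneg b) * v₁ + v₂) := by
  rw [← gaussianReal_conv_gaussianReal, ← gaussianReal_map_const_mul, Measure.conv,
    noisyCopyLaw, Measure.snd, Measure.map_map measurable_snd (by fun_prop)]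
  nth_rw 2 [← Measure.map_id (μ := gaussianReal m₂ v₂)]
  rw [Measure.map_prod_map _ _ (by fun_prop) measurable_id,
    Measure.map_map (by fun_prop) (by fun_prop)]
  rfl

lemma noisyCopyLaw_map_sub_smul {E : Type*} [MeasurableSpace E] [AddCommGroup E] [SMul ℝ E]
    [MeasurableAdd₂ E] [MeasurableSub₂ E] [MeasurableConstSMul ℝ E] (μ ν : Measure E)
    [IsProbabilityMeasure μ] [SFinite ν] (b : ℝ) :
    (noisyCopyLaw μ ν b).map (fun p => p.2 - b • p.1) = ν := by
  rw [noisyCopyLaw, Measure.map_map (by fun_prop) (by fun_prop)]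
  simp only [Function.comp_def, add_sub_cancel_left]
  exact Measure.snd_prod

/-- The log-likelihood ratio of `Y ∼ N(bx + m, w)` against `Y ∼ N(m', u)`. -/
noncomputable def noisyCopyLLR (b m m' : ℝ) (w u : NNReal) (p : ℝ × ℝ) : ℝ :=
  Real.log (gaussianPDFReal (b * p.1 + m) w p.2) - Real.log (gaussianPDFReal m' u p.2)

lemma noisyCopyLLR_eq (b m m' : ℝ) {w u : NNReal} (hw : w ≠ 0) (hu : u ≠ 0) (p : ℝ × ℝ) :
    noisyCopyLLR b m m' w u p = Real.log (u / w) / 2 -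
      (p.2 - b * p.1 - m) ^ 2 / (2 * w) + (p.2 - m') ^ 2 / (2 * u) := by
  have hw' : (w : ℝ) ≠ 0 := by exact_mod_cast hw
  have hu' : (u : ℝ) ≠ 0 := by exact_mod_cast hu
  rw [noisyCopyLLR, log_gaussianPDFReal _ hw, log_gaussianPDFReal _ hu, Real.log_div hu' hw',
    Real.log_mul (by positivity) hw', Real.log_mul (by positivity) hu']
  ring

lemma measurable_noisyCopyLLR (b m m' : ℝ) (w u : NNReal) :
    Measurable (noisyCopyLLR b m m' w u) := by
  unfold noisyCopyLLR gaussianPDFReal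
  fun_prop

lemma noisyCopyLaw_eq_withDensity (μ : Measure ℝ) (b m m' : ℝ) {w u : NNReal} (hw : w ≠ 0)
    (hu : u ≠ 0) :
    noisyCopyLaw μ (gaussianReal m w) b = (μ.prod (gaussianReal m' u)).withDensity
      fun p => ENNReal.ofReal (Real.exp (noisyCopyLLR b m m' w u p)) := by
  have hLLR := measurable_noisyCopyLLR b m m' w u
  have hadd : Measurable fun p : ℝ × ℝ => (p.1, b • p.1 + p.2) := by fun_prop
  ext s hs
  rw [noisyCopyLaw, Measure.map_apply hadd hs, Measure.prod_apply (hadd hs),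
    withDensity_apply _ hs, ← lintegral_indicator hs, lintegral_prod _ (by fun_prop)]
  refine lintegral_congr fun x => ?_
  have hx : MeasurableSet (Prod.mk x ⁻¹' s) := measurable_prodMk_left hs
  calc gaussianReal m w (Prod.mk x ⁻¹' ((fun p : ℝ × ℝ => (p.1, b • p.1 + p.2)) ⁻¹' s))
      = (gaussianReal m w).map (b * x + ·) (Prod.mk x ⁻¹' s) :=
        (Measure.map_apply (measurable_const_add (b * x)) hx).symm
    _ = gaussianReal (b * x + m) w (Prod.mk x ⁻¹' s) := by
        rw [gaussianReal_map_const_add, add_comm]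
    _ = ∫⁻ y, s.indicator
          (fun p => ENNReal.ofReal (Real.exp (noisyCopyLLR b m m' w u p))) (x, y)
          ∂gaussianReal m' u := by
        rw [← gaussianReal_withDensity_ratio (b * x + m) m' hw hu, withDensity_apply _ hx,
          ← lintegral_indicator hx]
        rfl

lemma integrable_sub_sq_of_hasLaw_gaussianReal {Ω : Type*} [MeasurableSpace Ω] {P : Measure Ω}
    {X : Ω → ℝ} {m : ℝ} {v : NNReal} (hX : HasLaw X (gaussianReal m v) P) :
    Integrable (fun ω => (X ω - m) ^ 2) P := by
  have hsq : Integrable (fun x => (x - m) ^ 2) (gaussianReal m v) :=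
    ((memLp_id_gaussianReal 2).sub (memLp_const m)).integrable_sq
  exact (hX.map_eq ▸ hsq).comp_aemeasurable hX.aemeasurable

lemma integral_sub_sq_of_hasLaw_gaussianReal {Ω : Type*} [MeasurableSpace Ω] {P : Measure Ω}
    {X : Ω → ℝ} {m : ℝ} {v : NNReal} (hX : HasLaw X (gaussianReal m v) P) :
    ∫ ω, (X ω - m) ^ 2 ∂P = v := by
  rw [← variance_id_gaussianReal (μ := m) (v := v), ← hX.variance_eq,
    variance_eq_integral hX.aemeasurable, hX.integral_eq, integral_id_gaussianReal]

section ExpectedLLR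

variable {J : Measure (ℝ × ℝ)} [IsProbabilityMeasure J] {b m m' : ℝ} {w u : NNReal}

lemma integrable_noisyCopyLLR (hw : w ≠ 0) (hu : u ≠ 0)
    (hnoise : HasLaw (fun p : ℝ × ℝ => p.2 - b * p.1) (gaussianReal m w) J)
    (hout : HasLaw Prod.snd (gaussianReal m' u) J) : Integrable (noisyCopyLLR b m m' w u) J := by
  rw [funext fun p => noisyCopyLLR_eq b m m' hw hu p]
  exact ((integrable_const _).sub
    ((integrable_sub_sq_of_hasLaw_gaussianReal hnoise).div_const _)).add
    ((integrable_sub_sq_of_hasLaw_gaussianReal hout).div_const _)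

lemma integral_noisyCopyLLR (hw : w ≠ 0) (hu : u ≠ 0)
    (hnoise : HasLaw (fun p : ℝ × ℝ => p.2 - b * p.1) (gaussianReal m w) J)
    (hout : HasLaw Prod.snd (gaussianReal m' u) J) :
    ∫ p, noisyCopyLLR b m m' w u p ∂J = Real.log (u / w) / 2 := by
  have hnoise_int := (integrable_sub_sq_of_hasLaw_gaussianReal hnoise).div_const (2 * w)
  have hout_int := (integrable_sub_sq_of_hasLaw_gaussianReal hout).div_const (2 * u)
  have hdiff_int : Integrable
      (fun p : ℝ × ℝ => Real.log (u / w) / 2 - (p.2 - b * p.1 - m) ^ 2 / (2 * w)) J :=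
    (integrable_const _).sub hnoise_int
  have hw' : (w : ℝ) ≠ 0 := by exact_mod_cast hw
  have hu' : (u : ℝ) ≠ 0 := by exact_mod_cast hu
  calc ∫ p, noisyCopyLLR b m m' w u p ∂J
      = ∫ p, (Real.log (u / w) / 2 - (p.2 - b * p.1 - m) ^ 2 / (2 * w) +
          (p.2 - m') ^ 2 / (2 * u)) ∂J := by simp only [noisyCopyLLR_eq b m m' hw hu]
    _ = Real.log (u / w) / 2 - w / (2 * w) + u / (2 * u) := by
        rw [integral_add hdiff_int hout_int,
          integral_sub (integrable_const _) hnoise_int, integral_const, integral_div, integral_div,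
          integral_sub_sq_of_hasLaw_gaussianReal hnoise,
          integral_sub_sq_of_hasLaw_gaussianReal hout, probReal_univ, one_smul]
    _ = Real.log (u / w) / 2 := by field_simp; ring

end ExpectedLLR

theorem klMutualInfo_noisyCopyLaw_gaussianReal (m₁ m₂ : ℝ) (v₁ : NNReal) {v₂ : NNReal}
    (h₂ : v₂ ≠ 0) (b : ℝ) :
    klMutualInfo (noisyCopyLaw (gaussianReal m₁ v₁) (gaussianReal m₂ v₂) b) =
      ENNReal.ofReal (Real.log (1 + b ^ 2 * v₁ / v₂) / 2) := by
  set J := noisyCopyLaw (gaussianReal m₁ v₁) (gaussianReal m₂ v₂) b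
  set m := b * m₁ + m₂
  set u : NNReal := .mk (b ^ 2) (sq_nonneg b) * v₁ + v₂
  have hu : u ≠ 0 := by positivity
  have hnoise : HasLaw (fun p : ℝ × ℝ => p.2 - b * p.1) (gaussianReal m₂ v₂) J :=
    ⟨by fun_prop, noisyCopyLaw_map_sub_smul _ _ b⟩
  have hout : HasLaw Prod.snd (gaussianReal m u) J :=
    ⟨by fun_prop, noisyCopyLaw_snd_gaussianReal m₁ m₂ v₁ v₂ b⟩
  have hdens : J = _ := noisyCopyLaw_eq_withDensity (gaussianReal m₁ v₁) b m₂ m h₂ hu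
  have hratio : (u : ℝ) / v₂ = 1 + b ^ 2 * v₁ / v₂ := by
    have hu_coe : (u : ℝ) = b ^ 2 * v₁ + v₂ := rfl
    rw [hu_coe, add_div, div_self (by exact_mod_cast h₂), add_comm]
  rw [← hratio, ← integral_noisyCopyLLR h₂ hu hnoise hout, klMutualInfo, noisyCopyLaw_fst,
    noisyCopyLaw_snd_gaussianReal]
  exact klDiv_eq_ofReal_integral (measurable_noisyCopyLLR b m₂ m v₂ u) hdens
    (integrable_noisyCopyLLR h₂ hu hnoise hout)

end GaussianChannel

section Resampling

variable (ι E : Type*) [Fintype ι] [NormedAddCommGroup E] [NormedSpace ℝ E]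

/-- Replaces the empirical mean of a sample `W : ι → E` by `(√|ι|)⁻¹ • ξ`, so that afterwards `ξ`
alone determines how the sample is centred. -/
noncomputable def resample : E × (ι → E) →L[ℝ] ι → E :=
  .pi fun i => (√(Fintype.card ι : ℝ))⁻¹ • .fst ℝ E (ι → E) +
    (.proj i - (Fintype.card ι : ℝ)⁻¹ • ∑ k, .proj k) ∘L .snd ℝ E (ι → E)

variable {ι E}

lemma resample_apply (ξ : E) (W : ι → E) (i : ι) :
    resample ι E (ξ, W) i =
      (√(Fintype.card ι : ℝ))⁻¹ • ξ + (W i - (Fintype.card ι : ℝ)⁻¹ • ∑ k, W k) := by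
  simp [resample]

lemma smul_resample_add {σ : ℝ} (hσ : σ ≠ 0) (x ξ : E) (W : ι → E) (i : ι) :
    σ • resample ι E ((√(Fintype.card ι : ℝ) / σ) • x + ξ, W) i =
      x + σ • resample ι E (ξ, W) i := by
  have : Nonempty ι := ⟨i⟩
  have hcard : √(Fintype.card ι : ℝ) ≠ 0 := by positivity
  have hgain : σ * ((√(Fintype.card ι : ℝ))⁻¹ * (√(Fintype.card ι : ℝ) / σ)) = 1 := by field_simp
  simp only [resample_apply, smul_add, smul_smul]
  rw [hgain, one_smul, add_assoc]

lemma comp_resample_inl [DecidableEq ι] (L : StrongDual ℝ (ι → E)) :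
    (L ∘L resample ι E) ∘L .inl ℝ E (ι → E) =
      (√(Fintype.card ι : ℝ))⁻¹ • ∑ k, L ∘L .single ℝ (fun _ => E) k := by
  ext ξ
  have hξ : resample ι E (ξ, 0) = (√(Fintype.card ι : ℝ))⁻¹ • fun _ => ξ := by
    ext i; simp [resample_apply]
  simp [hξ, ← ContinuousLinearMap.sum_comp_single ℝ (fun _ => E) L fun _ => ξ]

lemma comp_resample_inr_single [DecidableEq ι] (L : StrongDual ℝ (ι → E)) (i : ι) :
    ((L ∘L resample ι E) ∘L .inr ℝ E (ι → E)) ∘L .single ℝ (fun _ => E) i =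
      L ∘L .single ℝ (fun _ => E) i -
        (Fintype.card ι : ℝ)⁻¹ • ∑ k, L ∘L .single ℝ (fun _ => E) k := by
  ext w
  have hw : resample ι E (0, Pi.single i w) =
      Pi.single i w - (Fintype.card ι : ℝ)⁻¹ • fun _ => w := by
    ext j; simp [resample_apply]
  simp [hw, ← ContinuousLinearMap.sum_comp_single ℝ (fun _ => E) L fun _ => w]

/-- The variance decomposition `n x̄² + ∑ (xᵢ - x̄)² = ∑ xᵢ²`. -/
lemma bilin_smul_sum_add_sum_bilin_sub {F : Type*} [AddCommGroup F] [Module ℝ F]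
    {B : LinearMap.BilinForm ℝ F} (hB : B.IsSymm) (x : ι → F) :
    B ((√(Fintype.card ι : ℝ))⁻¹ • ∑ k, x k) ((√(Fintype.card ι : ℝ))⁻¹ • ∑ k, x k) +
      ∑ i, B (x i - (Fintype.card ι : ℝ)⁻¹ • ∑ k, x k) (x i - (Fintype.card ι : ℝ)⁻¹ • ∑ k, x k) =
    ∑ i, B (x i) (x i) := by
  rcases isEmpty_or_nonempty ι with _ | _
  · simp
  set n : ℝ := (Fintype.card ι : ℝ) with hn_def
  set S := ∑ k, x k
  have hn : 0 < n := by simpa [n] using Fintype.card_pos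
  have hmean : B ((√n)⁻¹ • S) ((√n)⁻¹ • S) = n⁻¹ * B S S := by
    simp only [map_smul, LinearMap.smul_apply, smul_eq_mul, ← mul_assoc, ← mul_inv,
      Real.mul_self_sqrt hn.le]
  have hdev (i : ι) : B (x i - n⁻¹ • S) (x i - n⁻¹ • S) =
      B (x i) (x i) - 2 * n⁻¹ * B (x i) S + n⁻¹ * n⁻¹ * B S S := by
    simp only [map_sub, map_smul, LinearMap.sub_apply, LinearMap.smul_apply, smul_eq_mul,
      hB.eq S (x i)]
    ring
  have hcross : ∑ i, B (x i) S = B S S := by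
    rw [← LinearMap.sum_apply, ← map_sum]
  simp only [hmean, hdev, Finset.sum_add_distrib, Finset.sum_sub_distrib, ← Finset.mul_sum, hcross,
    Finset.sum_const, Finset.card_univ, nsmul_eq_mul, ← hn_def]
  field_simp
  ring

lemma measurePreserving_resample [CompleteSpace E] [SecondCountableTopology E] [MeasurableSpace E]
    [BorelSpace E] (μ : Measure E) [IsGaussian μ] (hμ : μ[id] = 0) :
    MeasurePreserving (resample ι E) (μ.prod (Measure.pi fun _ => μ)) (Measure.pi fun _ => μ) := by
  classical
  refine ⟨(resample ι E).continuous.measurable, Measure.ext_of_charFunDual ?_⟩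
  ext L
  simp only [charFunDual_map, charFunDual_prod, charFunDual_pi, comp_resample_inl,
    comp_resample_inr_single, IsGaussian.charFunDual_eq_of_integral_eq_zero hμ,
    ← covarianceBilinDual_self_eq_variance (IsGaussian.memLp_two_id (μ := μ)), ← Complex.exp_sum,
    ← Complex.exp_add]
  simp only [← Finset.sum_div, ← add_div, Finset.sum_neg_distrib, ← neg_add, ← Complex.ofReal_sum,
    ← Complex.ofReal_add]
  have hvar := bilin_smul_sum_add_sum_bilin_sub
    (isPosSemidef_covarianceBilinDual (μ := μ)).isSymm fun i => L ∘L .single ℝ (fun _ => E) i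
  exact congrArg (fun v : ℝ => Complex.exp (-v / 2)) hvar

end Resampling

section StdGaussian

lemma isGaussian_pi {ι : Type*} [Fintype ι] {E : ι → Type*} [∀ i, NormedAddCommGroup (E i)]
    [∀ i, NormedSpace ℝ (E i)] [∀ i, CompleteSpace (E i)] [∀ i, SecondCountableTopology (E i)]
    [∀ i, MeasurableSpace (E i)] [∀ i, BorelSpace (E i)] (μ : ∀ i, Measure (E i))
    [∀ i, IsGaussian (μ i)] : IsGaussian (Measure.pi μ) := by
  have hcoord (i : ι) : HasGaussianLaw (fun x : ∀ i, E i => x i) (Measure.pi μ) :=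
    ⟨by rw [(measurePreserving_eval μ i).map_eq]; infer_instance⟩
  have hindep : iIndepFun (fun i (x : ∀ i, E i) => x i) (Measure.pi μ) :=
    iIndepFun_pi (X := fun _ => id) fun _ => aemeasurable_id
  simpa only [Measure.map_id'] using (hindep.hasGaussianLaw hcoord).isGaussian_map

lemma integral_id_pi {ι : Type*} [Fintype ι] {E : ι → Type*} [∀ i, NormedAddCommGroup (E i)]
    [∀ i, NormedSpace ℝ (E i)] [∀ i, CompleteSpace (E i)] [∀ i, SecondCountableTopology (E i)]
    [∀ i, MeasurableSpace (E i)] [∀ i, BorelSpace (E i)] (μ : ∀ i, Measure (E i))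
    [∀ i, IsProbabilityMeasure (μ i)] (hμ : ∀ i, Integrable id (μ i)) :
    (Measure.pi μ)[id] = fun i => (μ i)[id] := by
  ext i
  have hcoord (i : ι) : Integrable (fun x : ∀ i, E i => x i) (Measure.pi μ) :=
    (measurePreserving_eval μ i).integrable_comp_of_integrable (hμ i)
  refine (eval_integral hcoord i).trans ?_
  exact integral_comp_eval (f := id) aestronglyMeasurable_id

instance (L : ℕ) : IsGaussian (stdGaussian L) := isGaussian_pi _

lemma integral_id_stdGaussian (L : ℕ) : (stdGaussian L)[id] = 0 := by
  rw [stdGaussian, integral_id_pi _ fun _ => IsGaussian.integrable_id]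
  exact funext fun _ => integral_id_gaussianReal

lemma klMutualInfo_noisyCopyLaw_stdGaussian (L : ℕ) (b : ℝ) :
    klMutualInfo (noisyCopyLaw (stdGaussian L) (stdGaussian L) b) =
      ENNReal.ofReal (L / 2 * Real.log (1 + b ^ 2)) := by
  rw [stdGaussian, noisyCopyLaw_pi, klMutualInfo_pi]
  simp only [klMutualInfo_noisyCopyLaw_gaussianReal 0 0 1 one_ne_zero b, NNReal.coe_one, mul_one,
    div_one, Finset.sum_const, Finset.card_univ, Fintype.card_fin]
  rw [← ENNReal.ofReal_nsmul, nsmul_eq_mul, mul_div_assoc', div_mul_eq_mul_div]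

end StdGaussian

section MRA

instance (L : ℕ) [NeZero L] : IsProbabilityMeasure (unifFin L) where
  measure_univ := by
    simp [unifFin, Measure.count_univ, ENNReal.inv_mul_cancel, NeZero.ne]

/-- The cyclic shift `R_k` of the MRA model. -/
def cyclicShift {L : ℕ} (k : Fin L) (x : Fin L → ℝ) : Fin L → ℝ :=
  fun j => x (j + k)

@[fun_prop]
lemma measurable_cyclicShift {α : Type*} [MeasurableSpace α] {L : ℕ} {k : α → Fin L}
    {x : α → Fin L → ℝ} (hk : Measurable k) (hx : Measurable x) :
    Measurable fun a => cyclicShift (k a) (x a) := by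
  have hshift : Measurable fun q : Fin L × (Fin L → ℝ) => cyclicShift q.1 q.2 :=
    measurable_from_prod_countable_right fun k => by unfold cyclicShift; fun_prop
  exact hshift.comp (hk.prodMk hx)

lemma measurePreserving_cyclicShift {L : ℕ} (k : Fin L) :
    MeasurePreserving (cyclicShift k) (stdGaussian L) (stdGaussian L) := by
  have : NeZero L := ⟨k.pos.ne'⟩
  exact measurePreserving_arrowCongr' (fun _ => gaussianReal 0 1) (fun _ => gaussianReal 0 1)
    (Equiv.addRight k).symm (.refl ℝ) fun _ => .id _

variable (L n : ℕ)

lemma measurePreserving_cyclicShift_noise : MeasurePreserving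
    (fun q : (Fin n → Fin L) × (Fin n → Fin L → ℝ) => (q.1, fun i => cyclicShift (q.1 i) (q.2 i)))
    ((Measure.pi fun _ => unifFin L).prod (Measure.pi fun _ => stdGaussian L))
    ((Measure.pi fun _ => unifFin L).prod (Measure.pi fun _ => stdGaussian L)) := by
  have hmeas : Measurable fun q : (Fin n → Fin L) × (Fin n → Fin L → ℝ) =>
      fun i => cyclicShift (q.1 i) (q.2 i) := by fun_prop
  have hshift (ℓ : Fin n → Fin L) : MeasurePreserving (fun Z i => cyclicShift (ℓ i) (Z i))
      (Measure.pi fun _ => stdGaussian L) (Measure.pi fun _ => stdGaussian L) :=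
    measurePreserving_pi _ _ fun i => measurePreserving_cyclicShift (ℓ i)
  exact (MeasurePreserving.id _).skew_product hmeas (.of_forall fun ℓ => (hshift ℓ).map_eq)

lemma mraJoint_eq_map_cyclicShift (σ : ℝ) :
    mraJoint L n σ =
      (mraBase L n).map fun ω => (ω.1, fun i => cyclicShift (ω.2.1 i) (ω.1 + σ • ω.2.2 i)) := by
  have hY : mraY L n σ = fun ω i => cyclicShift (ω.2.1 i) ω.1 + σ • ω.2.2 i := rfl
  have hbase : MeasurePreserving _ (mraBase L n) (mraBase L n) :=
    (MeasurePreserving.id (stdGaussian L)).prod (measurePreserving_cyclicShift_noise L n)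
  rw [mraJoint, hY]
  nth_rw 1 [← hbase.map_eq]
  rw [Measure.map_map (by fun_prop) hbase.measurable]
  rfl

instance [NeZero L] (σ : ℝ) : IsProbabilityMeasure (mraJoint L n σ) := by
  rw [mraJoint_eq_map_cyclicShift, mraBase]
  exact Measure.isProbabilityMeasure_map (by fun_prop)

lemma measurePreserving_resample_noise [NeZero L] : MeasurePreserving
    (fun p : ((Fin L → ℝ) × (Fin L → ℝ)) × (Fin n → Fin L → ℝ) × (Fin n → Fin L) =>
      (p.1.1, p.2.2, resample (Fin n) (Fin L → ℝ) (p.1.2, p.2.1)))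
    (((stdGaussian L).prod (stdGaussian L)).prod
      ((Measure.pi fun _ => stdGaussian L).prod (Measure.pi fun _ => unifFin L)))
    (mraBase L n) := by
  have hresample :=
    measurePreserving_resample (ι := Fin n) (stdGaussian L) (integral_id_stdGaussian L)
  have hnoise := Measure.measurePreserving_swap.comp <|
    (hresample.prod (.id (Measure.pi fun _ : Fin n => unifFin L))).comp
      (measurePreserving_prodAssoc _ _ _).symm
  exact ((MeasurePreserving.id (stdGaussian L)).prod hnoise).comp
    (measurePreserving_prodAssoc _ _ _)

/-- Regenerates MRA measurements from one shift-free observation `s` of the signal and fresh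
randomness: noises `W` and shifts `ℓ`. -/
noncomputable def remeasure (σ : ℝ)
    (q : (Fin L → ℝ) × (Fin n → Fin L → ℝ) × (Fin n → Fin L)) : Fin n → Fin L → ℝ :=
  fun i => cyclicShift (q.2.2 i) (σ • resample (Fin n) (Fin L → ℝ) (q.1, q.2.1) i)

lemma measurable_remeasure (σ : ℝ) : Measurable (remeasure L n σ) := by
  unfold remeasure
  fun_prop

theorem mraJoint_eq_map_remeasure [NeZero L] {σ : ℝ} (hσ : σ ≠ 0) :
    mraJoint L n σ = ((noisyCopyLaw (stdGaussian L) (stdGaussian L) (√n / σ)).prod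
      ((Measure.pi fun _ => stdGaussian L).prod (Measure.pi fun _ => unifFin L))).map
        fun p => (p.1.1, remeasure L n σ (p.1.2, p.2)) := by
  have hmeas := measurable_remeasure L n σ
  set ρ := (Measure.pi fun _ : Fin n => stdGaussian L).prod
    (Measure.pi fun _ : Fin n => unifFin L)
  have hlaw : (noisyCopyLaw (stdGaussian L) (stdGaussian L) (√n / σ)).prod ρ =
      (((stdGaussian L).prod (stdGaussian L)).prod ρ).map
        (Prod.map (fun p => (p.1, (√n / σ) • p.1 + p.2)) id) := by
    rw [noisyCopyLaw, ← Measure.map_prod_map _ _ (by fun_prop) measurable_id, Measure.map_id]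
  rw [mraJoint_eq_map_cyclicShift, ← (measurePreserving_resample_noise L n).map_eq, hlaw,
    Measure.map_map (by fun_prop) (by fun_prop), Measure.map_map (by fun_prop) (by fun_prop)]
  refine congrArg (Measure.map · _) (funext fun p => Prod.ext rfl (funext fun i => ?_))
  have hregain := smul_resample_add hσ p.1.1 p.1.2 p.2.1 i
  rw [Fintype.card_fin] at hregain
  exact congrArg (cyclicShift (p.2.2 i)) hregain.symm

end MRA

/-- mutual information bound via the shift-free channel. In the MRA model,
`I(X; Y^n) ≤ (L/2)·log(1 + n/σ²)`. -/
theorem mutual_info_upper_bound_gaussian (L n : ℕ) (hL : 1 ≤ L) (σ : ℝ) (hσ : 0 < σ) :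
    mutualInfo (mraJoint L n σ) ≤ (L : ℝ) / 2 * Real.log (1 + n / σ ^ 2) := by
  have : NeZero L := ⟨by omega⟩
  have hgain : (√n / σ) ^ 2 = n / σ ^ 2 := by rw [div_pow, Real.sq_sqrt n.cast_nonneg]
  have hnonneg : 0 ≤ Real.log (1 + n / σ ^ 2) :=
    Real.log_nonneg (le_add_of_nonneg_right (by positivity))
  refine mutualInfo_le_of_klMutualInfo_le (by positivity) ?_
  calc klMutualInfo (mraJoint L n σ)
      ≤ klMutualInfo (noisyCopyLaw (stdGaussian L) (stdGaussian L) (√n / σ)) := by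
        rw [mraJoint_eq_map_remeasure L n hσ.ne']
        exact klMutualInfo_map_snd_le _ _ (measurable_remeasure L n σ)
    _ = ENNReal.ofReal (L / 2 * Real.log (1 + n / σ ^ 2)) := by
        rw [klMutualInfo_noisyCopyLaw_stdGaussian, hgain]

end MRAformal
end
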